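/- arXiv:2411.12237 — 5 statements merged into one kernel-verified Lean document; each statement's English description precedes it below -/
import Mathlib

section
/- For any fixed 0 < ε₁, ε₂ < 1 there exist c > 0 and a sufficiently large constant K such that the following holds for all n and d with n/d > K. If G is an n-vertex graph with minimum degree δ(G) = d which contains no K_{⌈cd⌉}^{(3)}-immersion, then G is (dm^x, d²m^x, d/2)-dense for every integer x with 0 < x < 100, where m = (2/ε₁)·log³(15n/(ε₂d)). -/
/-!
Write `A` for a deleted vertex set `U`, and `M = m ^ x`. If deleting `A` and the edges `W` leaves
average degree below `d / 2`, then, as every vertex has degree at least `d` and `|A| ≤ d M`,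
`|W| ≤ d² M`, the vertices outside `A` send on average at least `d / 3` edges into `A`
(`cross_edges_lower`). Since `M` is polylogarithmic in `n / d`, there are at least `288 d M²`
vertices outside `A` (`exists_threshold`), so `A` is tiny compared with its complement.

Fix `t = ⌈d / 1000⌉`. Dependent random choice with one random vertex applies: a pair in `A` with at
most `4 t` common neighbours outside `A` lies in at most `4 t ≤ d` neighbourhoods, so some `b ∉ A`
has a neighbourhood `S` in `A` of size at least `d / 5` in which at most a sixteenth of the ordered
pairs have so few common neighbours (`exists_good_nbhd`). In other words, the auxiliary graph on `S`
joining pairs with many common neighbours is nearly complete.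

Choose `t` branch vertices in `S` of large auxiliary degree. Two of them are joined by a path
`a, b, a', b', a''` of length four whose middle vertex `a'` is a common auxiliary neighbour. Greedy
list colouring (`exists_list_coloring`) is applied twice, to choose the middle vertices so that none
is overused, and then to choose the vertices `b`, `b'` outside `A` so that the paths are
edge-disjoint (`immersion_of_good_branch`).
-/

open SimpleGraph

noncomputable def avgDeg {V : Type*} (G : SimpleGraph V) : ℝ :=
  2 * (Nat.card G.edgeSet : ℝ) / (Nat.card V : ℝ)

noncomputable def minDeg {V : Type*} (G : SimpleGraph V) : ℕ :=
  sInf (Set.range fun v => Nat.card (G.neighborSet v))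

noncomputable def rho (ε₁ k x : ℝ) : ℝ :=
  if x < k / 5 then 0 else ε₁ / Real.log (15 * x / k) ^ 2

def extNbhd {V : Type*} (G : SimpleGraph V) (X : Set V) : Set V :=
  {v | v ∉ X ∧ ∃ x ∈ X, G.Adj x v}

def IsRobustExpander {V : Type*} (G : SimpleGraph V) (ε₁ k : ℝ) : Prop :=
  ∀ X : Set V, k / 2 ≤ (X.ncard : ℝ) → (X.ncard : ℝ) ≤ (Nat.card V : ℝ) / 2 →
    ∀ F : Set (Sym2 V), F ⊆ G.edgeSet →
      (F.ncard : ℝ) ≤ avgDeg G * rho ε₁ k (X.ncard : ℝ) * (X.ncard : ℝ) →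
      rho ε₁ k (X.ncard : ℝ) * (X.ncard : ℝ) ≤ ((extNbhd (G.deleteEdges F) X).ncard : ℝ)

def GraphDense {V : Type*} (G : SimpleGraph V) (s t γ : ℝ) : Prop :=
  ∀ U : Set V, (U.ncard : ℝ) ≤ s →
    ∀ W : Set (Sym2 V), W ⊆ G.edgeSet → (W.ncard : ℝ) ≤ t →
      γ ≤ avgDeg ((G.deleteEdges W).induce Uᶜ)

noncomputable def mParam (ε₁ ε₂ : ℝ) (n : ℕ) (d : ℝ) : ℝ :=
  2 / ε₁ * Real.log (15 * n / (ε₂ * d)) ^ 3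

def HasCliqueImmersion {V : Type*} (G : SimpleGraph V) (t : ℕ) : Prop :=
  ∃ φ : Fin t → V, Function.Injective φ ∧
    ∃ P : ∀ i j : Fin t, i < j → G.Walk (φ i) (φ j),
      (∀ i j (h : i < j), (P i j h).IsPath) ∧
      ∀ i j (h : i < j), ∀ i' j' (h' : i' < j'), (i, j) ≠ (i', j') →
        ∀ e ∈ (P i j h).edges, e ∉ (P i' j' h').edges

def HasBalancedCliqueImmersion {V : Type*} (G : SimpleGraph V) (t ℓ : ℕ) : Prop :=
  ∃ φ : Fin t → V, Function.Injective φ ∧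
    ∃ P : ∀ i j : Fin t, i < j → G.Walk (φ i) (φ j),
      (∀ i j (h : i < j), (P i j h).IsPath ∧ (P i j h).length = ℓ + 1) ∧
      ∀ i j (h : i < j), ∀ i' j' (h' : i' < j'), (i, j) ≠ (i', j') →
        ∀ e ∈ (P i j h).edges, e ∉ (P i' j' h').edges

def HasCliqueSubdivision {V : Type*} (G : SimpleGraph V) (t : ℕ) : Prop :=
  ∃ φ : Fin t → V, Function.Injective φ ∧
    ∃ P : ∀ i j : Fin t, i < j → G.Walk (φ i) (φ j),
      (∀ i j (h : i < j), (P i j h).IsPath) ∧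
      (∀ i j (h : i < j) (k : Fin t), φ k ∈ (P i j h).support → k = i ∨ k = j) ∧
      ∀ i j (h : i < j), ∀ i' j' (h' : i' < j'), (i, j) ≠ (i', j') →
        ∀ v, v ∈ (P i j h).support → v ∈ (P i' j' h').support →
          (v = φ i ∨ v = φ j) ∧ (v = φ i' ∨ v = φ j')

def HasBalancedCliqueSubdivision {V : Type*} (G : SimpleGraph V) (t ℓ : ℕ) : Prop :=
  ∃ φ : Fin t → V, Function.Injective φ ∧
    ∃ P : ∀ i j : Fin t, i < j → G.Walk (φ i) (φ j),
      (∀ i j (h : i < j), (P i j h).IsPath ∧ (P i j h).length = ℓ + 1) ∧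
      (∀ i j (h : i < j) (k : Fin t), φ k ∈ (P i j h).support → k = i ∨ k = j) ∧
      ∀ i j (h : i < j), ∀ i' j' (h' : i' < j'), (i, j) ≠ (i', j') →
        ∀ v, v ∈ (P i j h).support → v ∈ (P i' j' h').support →
          (v = φ i ∨ v = φ j) ∧ (v = φ i' ∨ v = φ j')

def IsNDL {V : Type*} [Fintype V] [DecidableEq V] (G : SimpleGraph V) [DecidableRel G.Adj]
    (n d : ℕ) (lam : ℝ) : Prop :=
  Fintype.card V = n ∧ G.IsRegularOfDegree d ∧
    ∃ hH : (G.adjMatrix ℝ).IsHermitian, ∃ v₀ : V,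
      (∀ v : V, hH.eigenvalues v ≤ hH.eigenvalues v₀) ∧
      ∀ v : V, v ≠ v₀ → |hH.eigenvalues v| ≤ lam

def IsExpansion {V : Type*} {G : SimpleGraph V} (F : G.Subgraph) (v : V) (D m : ℝ) : Prop :=
  ∃ hv : v ∈ F.verts,
    (Nat.card F.verts : ℝ) = D ∧
      ∀ u : F.verts, F.coe.Reachable ⟨v, hv⟩ u ∧ (F.coe.dist ⟨v, hv⟩ u : ℝ) ≤ m

structure AdjusterIn {V : Type*} (G : SimpleGraph V) (D m : ℝ) (k : ℕ) where
  u₁ : V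
  u₂ : V
  I₁ : G.Subgraph
  I₂ : G.Subgraph
  A : Set V
  disjA₁ : Disjoint A I₁.verts
  disjA₂ : Disjoint A I₂.verts
  disjI : Disjoint I₁.verts I₂.verts
  exp₁ : IsExpansion I₁ u₁ D m
  exp₂ : IsExpansion I₂ u₂ D m
  cardA : (A.ncard : ℝ) ≤ 10 * m * k
  paths : ∃ ℓ : ℕ, ∀ i : ℕ, i ≤ k → ∃ p : G.Walk u₁ u₂,
    p.IsPath ∧ p.length = ℓ + 2 * i ∧ ∀ w ∈ p.support, w ∈ A ∪ {u₁, u₂}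

def AdjusterIn.vertexSet {V : Type*} {G : SimpleGraph V} {D m : ℝ} {k : ℕ}
    (a : AdjusterIn G D m k) : Set V :=
  a.A ∪ a.I₁.verts ∪ a.I₂.verts

def HasAdjuster {V : Type*} (G : SimpleGraph V) (D m : ℝ) (k : ℕ) : Prop :=
  Nonempty (AdjusterIn G D m k)

structure UnitIn {V : Type*} (G : SimpleGraph V) (d₁ d₂ h : ℝ) where
  core : V
  numStars : ℕ
  hNum : d₁ ≤ (numStars : ℝ)
  center : Fin numStars → V
  leaves : Fin numStars → Finset V
  toPath : ∀ i, G.Walk core (center i)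
  hLeaves : ∀ i, d₂ ≤ ((leaves i).card : ℝ)
  core_not_leaf : ∀ i, core ∉ leaves i
  core_ne_center : ∀ i, core ≠ center i
  center_not_leaf : ∀ i, center i ∉ leaves i
  star_adj : ∀ i, ∀ u ∈ leaves i, G.Adj (center i) u
  stars_disjoint : ∀ i j, i ≠ j →
    Disjoint (insert (center i) (↑(leaves i) : Set V)) (insert (center j) ↑(leaves j))
  path_isPath : ∀ i, (toPath i).IsPath
  path_length : ∀ i, ((toPath i).length : ℝ) ≤ h
  paths_meet_in_core : ∀ i j, i ≠ j →
    ∀ u, u ∈ (toPath i).support → u ∈ (toPath j).support → u = core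
  paths_meet_stars : ∀ i j, ∀ u ∈ (toPath i).support,
    u ∈ insert (center j) (↑(leaves j) : Set V) → i = j ∧ u = center j

def UnitIn.edgeSet {V : Type*} {G : SimpleGraph V} {d₁ d₂ h : ℝ} (U : UnitIn G d₁ d₂ h) :
    Set (Sym2 V) :=
  (⋃ i, ⋃ u ∈ U.leaves i, {s(U.center i, u)}) ∪ ⋃ i, {e | e ∈ (U.toPath i).edges}

def HasUnit {V : Type*} (G : SimpleGraph V) (d₁ d₂ h : ℝ) : Prop :=
  Nonempty (UnitIn G d₁ d₂ h)

def HasTwoStarCollections {V : Type*} (G : SimpleGraph V) (k₁ s₁ k₂ s₂ : ℕ) : Prop :=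
  ∃ (c : Fin k₁ ⊕ Fin k₂ → V) (L : Fin k₁ ⊕ Fin k₂ → Finset V),
    (∀ i, c i ∉ L i) ∧
    (∀ i, ∀ u ∈ L i, G.Adj (c i) u) ∧
    (∀ i : Fin k₁, (L (Sum.inl i)).card = s₁) ∧
    (∀ j : Fin k₂, (L (Sum.inr j)).card = s₂) ∧
    ∀ i j, i ≠ j → Disjoint (insert (c i) (↑(L i) : Set V)) (insert (c j) ↑(L j))

def LinkedPaths {V : Type*} (G : SimpleGraph V) (U : Set V) (W : Set (Sym2 V))
    (a b c e : V) (ℓ : ℕ) (m : ℝ) : Prop :=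
  ∃ (P : G.Walk a b) (Q : G.Walk c e),
    P.IsPath ∧ Q.IsPath ∧
    (∀ w ∈ P.support, w ∉ U) ∧ (∀ w ∈ Q.support, w ∉ U) ∧
    (∀ e' ∈ P.edges, e' ∉ W) ∧ (∀ e' ∈ Q.edges, e' ∉ W) ∧
    (∀ w ∈ P.support, w ∉ Q.support) ∧
    (ℓ : ℝ) ≤ (P.length : ℝ) + (Q.length : ℝ) ∧
    (P.length : ℝ) + (Q.length : ℝ) ≤ (ℓ : ℝ) + 10 * m

/-! ### Greedy list colouring -/

/-- Greedy list colouring: if every item has a list longer than its number of conflicts, then a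
choice from the lists exists in which distinct conflicting items receive distinct values. -/
theorem exists_list_coloring {I α : Type*} [Fintype I] (R : I → I → Prop)
    (hR : ∀ i j, R i j → R j i) (lst : I → Finset α)
    (h : ∀ i, {j | R i j}.ncard < (lst i).card) :
    ∃ f : I → α, (∀ i, f i ∈ lst i) ∧ ∀ i j, i ≠ j → R i j → f i ≠ f j := by
  classical
  suffices H : ∀ s : Finset I, ∃ f : I → α, (∀ i, f i ∈ lst i) ∧
      ∀ i ∈ s, ∀ j ∈ s, i ≠ j → R i j → f i ≠ f j by
    obtain ⟨f, h1, h2⟩ := H Finset.univ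
    exact ⟨f, h1, fun i j => h2 i (Finset.mem_univ _) j (Finset.mem_univ _)⟩
  intro s
  induction s using Finset.induction_on with
  | empty =>
    have hne : ∀ i, ∃ a, a ∈ lst i := fun i =>
      Finset.card_pos.1 (lt_of_le_of_lt (Nat.zero_le _) (h i))
    choose f hf using hne
    exact ⟨f, hf, by simp⟩
  | insert k s hk ih =>
    obtain ⟨f, h1, h2⟩ := ih
    have hcard : ((Finset.univ.filter (fun j => R k j)).image f).card < (lst k).card := by
      refine lt_of_le_of_lt Finset.card_image_le ?_
      have := h k
      rwa [Set.ncard_eq_toFinset_card', Set.toFinset_ofPred] at this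
    obtain ⟨a, ha, ha'⟩ := Finset.exists_mem_notMem_of_card_lt_card hcard
    have ha2 : ∀ j, R k j → a ≠ f j := by
      intro j hj e
      exact ha' (Finset.mem_image.2 ⟨j, by simp [hj], e.symm⟩)
    refine ⟨Function.update f k a, ?_, ?_⟩
    · intro i
      by_cases hik : i = k
      · subst hik; simpa using ha
      · simpa [hik] using h1 i
    · intro i hi j hj hij hr
      by_cases hik : i = k
      · subst hik
        have hji : j ≠ i := hij.symm
        simpa [hji] using ha2 j hr
      · by_cases hjk : j = k
        · subst hjk
          simpa [hik] using (ha2 i (hR _ _ hr)).symm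
        · simp only [Function.update_of_ne hik, Function.update_of_ne hjk]
          exact h2 i (by simpa [hik] using hi) j (by simpa [hjk] using hj) hij hr

/-! ### Building the immersion -/

/-- The common neighbours of `a` and `a'` lying outside `A`. -/
noncomputable def outerCommonNbrs {V : Type*} [Fintype V] (G : SimpleGraph V) (A : Finset V)
    (a a' : V) : Finset V :=
  by classical exact Finset.univ.filter fun b => b ∉ A ∧ G.Adj a b ∧ G.Adj a' b

theorem mem_outerCommonNbrs {V : Type*} [Fintype V] {G : SimpleGraph V} {A : Finset V}
    {a a' b : V} : b ∈ outerCommonNbrs G A a a' ↔ b ∉ A ∧ G.Adj a b ∧ G.Adj a' b := by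
  simp [outerCommonNbrs]

theorem ncard_or_four {α : Type*} [Finite α] {p q r s : α → Prop} {t : ℕ}
    (hp : {x | p x}.ncard ≤ t) (hq : {x | q x}.ncard ≤ t)
    (hr : {x | r x}.ncard ≤ t) (hs : {x | s x}.ncard ≤ t) :
    {x | p x ∨ q x ∨ r x ∨ s x}.ncard ≤ 4 * t := by
  have e : {x | p x ∨ q x ∨ r x ∨ s x} = {x | p x} ∪ ({x | q x} ∪ ({x | r x} ∪ {x | s x})) := by
    ext; simp
  rw [e]
  have h1 := Set.ncard_union_le {x | p x} ({x | q x} ∪ ({x | r x} ∪ {x | s x}))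
  have h2 := Set.ncard_union_le {x | q x} ({x | r x} ∪ {x | s x})
  have h3 := Set.ncard_union_le {x | r x} {x | s x}
  omega

theorem ncard_le_of_injOn_fin {α : Type*} {t : ℕ} {s : Set α} (g : α → Fin t)
    (hg : Set.InjOn g s) : s.ncard ≤ t := by
  rw [← hg.ncard_image]
  calc (g '' s).ncard ≤ (Set.univ : Set (Fin t)).ncard := Set.ncard_le_ncard (Set.subset_univ _)
    _ = t := by simp [Set.ncard_univ]

/-- If any two branch vertices have many possible middle vertices in `S`, each having many common
neighbours outside `A` with both, then the length-four paths can be chosen edge-disjointly.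
Middle vertices are chosen as a proper edge colouring of the complete graph on the branch vertices,
so each serves at most `t` ordered pairs; the vertices outside `A` are then chosen so that
half-paths sharing an end in `A` use different ones. -/
theorem immersion_of_good_branch {V : Type*} [Fintype V] (G : SimpleGraph V) (A S : Finset V)
    (hSA : S ⊆ A) (t : ℕ) (φ : Fin t → V) (hφ : Function.Injective φ) (hφA : ∀ i, φ i ∈ A)
    (M : Fin t → Fin t → Finset V) (hMS : ∀ i j, M i j ⊆ S)
    (hM : ∀ i j, 4 * t < (M i j).card)
    (hM1 : ∀ i j, ∀ a ∈ M i j, a ≠ φ i ∧ a ≠ φ j ∧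
      4 * t < (outerCommonNbrs G A (φ i) a).card ∧ 4 * t < (outerCommonNbrs G A (φ j) a).card) :
    HasBalancedCliqueImmersion G t 3 := by
  classical
  obtain ⟨f, hf, hf2⟩ := exists_list_coloring (I := Fin t × Fin t)
    (fun p q => p.1 = q.1 ∨ p.1 = q.2 ∨ p.2 = q.1 ∨ p.2 = q.2)
    (by intro i j; grind) (fun p => M p.1 p.2) (by
      intro p
      refine lt_of_le_of_lt (ncard_or_four ?_ ?_ ?_ ?_) (hM p.1 p.2)
      · exact ncard_le_of_injOn_fin Prod.snd (by intro x hx y hy; grind)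
      · exact ncard_le_of_injOn_fin Prod.fst (by intro x hx y hy; grind)
      · exact ncard_le_of_injOn_fin Prod.snd (by intro x hx y hy; grind)
      · exact ncard_le_of_injOn_fin Prod.fst (by intro x hx y hy; grind))
  -- The middle vertex depends only on the unordered pair.
  obtain ⟨mid, hmid⟩ : ∃ mid : Fin t × Fin t → V, ∀ q, mid q = f (min q.1 q.2, max q.1 q.2) :=
    ⟨_, fun _ => rfl⟩
  have hmidswap : ∀ i j, mid (i, j) = mid (j, i) := by
    intro i j; simp [hmid, min_comm, max_comm]
  have hmidM : ∀ q : Fin t × Fin t, mid q ≠ φ q.1 ∧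
      4 * t < (outerCommonNbrs G A (φ q.1) (mid q)).card ∧ mid q ∈ A := by
    rintro ⟨i, j⟩
    rw [hmid]
    have h1 := hf (min i j, max i j)
    have h2 := hM1 _ _ _ h1
    have h3 := hSA (hMS _ _ h1)
    rcases le_total i j with h | h
    · simp only [min_eq_left h, max_eq_right h] at h1 h2 h3 ⊢
      exact ⟨h2.1, h2.2.2.1, h3⟩
    · simp only [min_eq_right h, max_eq_left h] at h1 h2 h3 ⊢
      exact ⟨h2.2.1, h2.2.2.2, h3⟩
  have hload : ∀ a, {q | mid q = a}.ncard ≤ t := by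
    intro a
    refine ncard_le_of_injOn_fin Prod.fst ?_
    rintro ⟨i, j⟩ h1 ⟨i', j'⟩ h2 h3
    simp only [Set.mem_ofPred_eq] at h1 h2 h3
    subst h3
    have h4 := hf2 (min i j, max i j) (min i j', max i j')
    rw [hmid] at h1 h2
    by_contra hne
    have hjj : j ≠ j' := fun e => hne (by rw [e])
    refine h4 ?_ ?_ (h1.trans h2.symm)
    · intro e
      simp only [Prod.mk.injEq] at e
      apply hjj
      grind
    · simp only
      grind
  obtain ⟨β, hβ, hβ2⟩ := exists_list_coloring (I := Fin t × Fin t)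
    (fun p q => φ p.1 = φ q.1 ∨ mid q = φ p.1 ∨ φ q.1 = mid p ∨ mid q = mid p)
    (by intro i j; grind) (fun p => outerCommonNbrs G A (φ p.1) (mid p)) (by
      intro p
      refine lt_of_le_of_lt (ncard_or_four ?_ ?_ ?_ ?_) (hmidM p).2.1
      · refine ncard_le_of_injOn_fin Prod.snd ?_
        rintro ⟨i, j⟩ hx ⟨i', j'⟩ hy h
        have := hφ ((show φ p.1 = φ i from hx).symm.trans (show φ p.1 = φ i' from hy))
        grind
      · exact hload _
      · refine ncard_le_of_injOn_fin Prod.snd ?_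
        rintro ⟨i, j⟩ hx ⟨i', j'⟩ hy h
        have := hφ ((show φ i = mid p from hx).trans (show φ i' = mid p from hy).symm)
        grind
      · exact hload _)
  have hβ' : ∀ q, β q ∉ A ∧ G.Adj (φ q.1) (β q) ∧ G.Adj (mid q) (β q) := fun q =>
    mem_outerCommonNbrs.1 (hβ q)
  -- Distinct half-paths have no edge in common.
  have hkey : ∀ q q' : Fin t × Fin t, q ≠ q' → ∀ a b, (a = φ q.1 ∨ a = mid q) →
      (b = φ q'.1 ∨ b = mid q') → s(a, β q) ≠ s(b, β q') := by
    intro q q' hqq a b ha hb e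
    have haA : a ∈ A := by
      rcases ha with rfl | rfl
      exacts [hφA _, (hmidM _).2.2]
    have hbA : b ∈ A := by
      rcases hb with rfl | rfl
      exacts [hφA _, (hmidM _).2.2]
    rw [Sym2.eq_iff] at e
    rcases e with ⟨e1, e2⟩ | ⟨e1, e2⟩
    · refine hβ2 q q' hqq ?_ e2
      grind
    · exact (hβ' q').1 (e1 ▸ haA)
  have w1 : ∀ i j, G.Adj (φ i) (β (i, j)) := fun i j => (hβ' (i, j)).2.1
  have w2 : ∀ i j, G.Adj (β (i, j)) (mid (i, j)) := fun i j => (hβ' (i, j)).2.2.symm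
  have w3 : ∀ i j, G.Adj (mid (i, j)) (β (j, i)) := fun i j => by
    rw [hmidswap]; exact (hβ' (j, i)).2.2
  have w4 : ∀ i j, G.Adj (β (j, i)) (φ j) := fun i j => (hβ' (j, i)).2.1.symm
  refine ⟨φ, hφ, fun i j _ => .cons (w1 i j) (.cons (w2 i j) (.cons (w3 i j)
    (.cons (w4 i j) .nil))), ?_, ?_⟩
  · intro i j hij
    refine ⟨?_, by simp⟩
    rw [Walk.isPath_def]
    have m1 := (hmidM (i, j)).1
    have m2 := (hmidM (j, i)).1
    have m3 := (hmidM (i, j)).2.2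
    have b1 := (hβ' (i, j)).1
    have b2 := (hβ' (j, i)).1
    have a1 := hφA i
    have a2 := hφA j
    have n1 : φ i ≠ φ j := fun e => hij.ne (hφ e)
    have n2 : β (i, j) ≠ β (j, i) := hβ2 _ _ (by simp [hij.ne])
      (Or.inr (Or.inr (Or.inr (hmidswap j i))))
    rw [← hmidswap] at m2
    simp only [Walk.support_cons, Walk.support_nil, List.nodup_cons, List.mem_cons,
      List.not_mem_nil, or_false, not_or, List.nodup_nil, not_false_eq_true, and_true]
    exact ⟨⟨fun e => b1 (e ▸ a1), m1.symm, fun e => b2 (e ▸ a1), n1⟩,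
      ⟨fun e => b1 (e ▸ m3), n2, fun e => b1 (e ▸ a2)⟩,
      ⟨fun e => b2 (e ▸ m3), m2⟩, fun e => b2 (e ▸ a2)⟩
  · intro i j hij i' j' hij' hne e he he'
    -- Every edge of a path is `s(a, β q)` for one of its two half-paths `q`.
    have hform : ∀ i j, ∀ e : Sym2 V, (e = s(φ i, β (i, j)) ∨ e = s(β (i, j), mid (i, j)) ∨
        e = s(mid (i, j), β (j, i)) ∨ e = s(β (j, i), φ j)) →
        ∃ q : Fin t × Fin t, (q = (i, j) ∨ q = (j, i)) ∧
          ∃ a, (a = φ q.1 ∨ a = mid q) ∧ e = s(a, β q) := by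
      intro i j e he
      rcases he with rfl | rfl | rfl | rfl
      · exact ⟨(i, j), Or.inl rfl, _, Or.inl rfl, rfl⟩
      · exact ⟨(i, j), Or.inl rfl, _, Or.inr rfl, Sym2.eq_swap⟩
      · exact ⟨(j, i), Or.inr rfl, _, Or.inr rfl, by rw [hmidswap]⟩
      · exact ⟨(j, i), Or.inr rfl, _, Or.inl rfl, Sym2.eq_swap⟩
    simp only [Walk.edges_cons, Walk.edges_nil, List.mem_cons, List.not_mem_nil, or_false]
      at he he'
    obtain ⟨q, hq, a, ha, e1⟩ := hform i j e he
    obtain ⟨q', hq', b, hb, e2⟩ := hform i' j' e he'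
    refine hkey q q' ?_ a b ha hb (e1.symm.trans e2)
    rintro rfl
    have : (i, j) = (i', j') := by
      rcases hq with rfl | rfl <;> rcases hq' with hq' | hq' <;>
        simp only [Prod.mk.injEq] at hq' ⊢ <;> omega
    exact hne this

/-- A set `S` of size at least `100 t` in which at most one sixteenth of the ordered pairs have few
outer common neighbours yields the immersion: at least half of `S` may serve as branch vertices. -/
theorem immersion_of_few_bad {V : Type*} [Fintype V] [DecidableEq V] (G : SimpleGraph V)
    (A S : Finset V)
    (hSA : S ⊆ A) (t : ℕ) (ht : 1 ≤ t) (hS : 100 * t ≤ S.card)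
    (hbad : 16 * ∑ a ∈ S, (S.filter fun a' => (outerCommonNbrs G A a a').card ≤ 4 * t).card
      ≤ S.card ^ 2) :
    HasBalancedCliqueImmersion G t 3 := by
  classical
  set bad : V → Finset V := fun a => S.filter fun a' => (outerCommonNbrs G A a a').card ≤ 4 * t
    with hbd
  set T := S.filter fun a => 8 * (bad a).card ≤ S.card with hT
  have hTc : t ≤ T.card := by
    by_contra hlt
    push Not at hlt
    have h1 : T.card + (S.filter fun a => ¬ 8 * (bad a).card ≤ S.card).card = S.card :=
      Finset.card_filter_add_card_filter_not _
    have h2 : (S.filter fun a => ¬ 8 * (bad a).card ≤ S.card).card * S.card ≤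
        ∑ a ∈ S, 8 * (bad a).card := by
      calc _ = ∑ a ∈ S.filter (fun a => ¬ 8 * (bad a).card ≤ S.card), S.card := by simp
        _ ≤ ∑ a ∈ S.filter (fun a => ¬ 8 * (bad a).card ≤ S.card), 8 * (bad a).card := by
          refine Finset.sum_le_sum fun a ha => ?_
          have := (Finset.mem_filter.1 ha).2
          omega
        _ ≤ _ := Finset.sum_le_sum_of_subset (Finset.filter_subset _ _)
    rw [← Finset.mul_sum] at h2
    have h3 : 16 * ∑ a ∈ S, (bad a).card ≤ S.card ^ 2 := hbad
    have h4 : S.card + 1 ≤ 2 * (S.filter fun a => ¬ 8 * (bad a).card ≤ S.card).card := by omega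
    have h5 := Nat.mul_le_mul_right S.card h4
    nlinarith
  obtain ⟨T', hT', hT'c⟩ := Finset.exists_subset_card_eq hTc
  let φ : Fin t ≃ T' := (T'.equivFinOfCardEq hT'c).symm
  have hφT : ∀ i, (φ i : V) ∈ T := fun i => hT' (φ i).2
  refine immersion_of_good_branch G A S hSA t (fun i => (φ i : V))
    (Subtype.val_injective.comp φ.injective)
    (fun i => hSA (Finset.mem_filter.1 (hφT i)).1)
    (fun i j => S \ (bad (φ i) ∪ bad (φ j) ∪ {(φ i : V), (φ j : V)}))
    (fun i j => Finset.sdiff_subset) ?_ ?_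
  · intro i j
    have h1 := (Finset.mem_filter.1 (hφT i)).2
    have h2 := (Finset.mem_filter.1 (hφT j)).2
    have h3 := Finset.le_card_sdiff (bad (φ i) ∪ bad (φ j) ∪ {(φ i : V), (φ j : V)}) S
    have h4 := Finset.card_union_le (bad (φ i) ∪ bad (φ j)) {(φ i : V), (φ j : V)}
    have h5 := Finset.card_union_le (bad (φ i)) (bad (φ j))
    have h6 := Finset.card_le_two (a := (φ i : V)) (b := (φ j : V))
    omega
  · intro i j a ha
    simp only [hbd, Finset.mem_sdiff, Finset.mem_union, Finset.mem_filter, Finset.mem_insert,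
      Finset.mem_singleton, not_or, not_and, not_le] at ha
    obtain ⟨haS, ⟨h1, h2⟩, h3, h4⟩ := ha
    exact ⟨h3, h4, h1 haS, h2 haS⟩

/-! ### Averaging over vertices outside `A` -/

/-- Double counting triples `(b, a, a')` with `b ∉ A` adjacent to both `a, a' ∈ A`, where `a` and
`a'` have at most `L` common neighbours outside `A`. -/
theorem sum_bad_le {V : Type*} [Fintype V] [DecidableEq V] (G : SimpleGraph V)
    [DecidableRel G.Adj] (A : Finset V) (L : ℕ) :
    ∑ b ∈ Aᶜ, ∑ a ∈ A.filter (G.Adj b), ((A.filter (G.Adj b)).filter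
        fun a' => (outerCommonNbrs G A a a').card ≤ L).card ≤ A.card ^ 2 * L := by
  have e : ∀ b ∈ Aᶜ, (∑ a ∈ A.filter (G.Adj b), ((A.filter (G.Adj b)).filter
        fun a' => (outerCommonNbrs G A a a').card ≤ L).card) =
      ∑ a ∈ A, ∑ a' ∈ A, if (outerCommonNbrs G A a a').card ≤ L then
        (if b ∈ outerCommonNbrs G A a a' then 1 else 0) else 0 := by
    intro b hb
    have hb' : b ∉ A := Finset.mem_compl.1 hb
    rw [Finset.sum_filter]
    refine Finset.sum_congr rfl fun a _ => ?_
    by_cases h : G.Adj b a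
    · rw [if_pos h, Finset.card_filter, Finset.sum_filter]
      refine Finset.sum_congr rfl fun a' _ => ?_
      simp only [mem_outerCommonNbrs, hb', h.symm, G.adj_comm a' b, not_false_eq_true, true_and]
      split_ifs <;> rfl
    · rw [if_neg h]
      symm
      refine Finset.sum_eq_zero fun a' _ => ?_
      have h' : ¬ G.Adj a b := fun k => h k.symm
      simp only [mem_outerCommonNbrs, h', false_and, and_false, if_false, ite_self]
  rw [Finset.sum_congr rfl e, Finset.sum_comm]
  have h2 : ∀ a ∈ A, (∑ b ∈ Aᶜ, ∑ a' ∈ A, if (outerCommonNbrs G A a a').card ≤ L then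
        (if b ∈ outerCommonNbrs G A a a' then 1 else 0) else 0) ≤ A.card * L := by
    intro a _
    rw [Finset.sum_comm, ← smul_eq_mul]
    refine Finset.sum_le_card_nsmul _ _ _ fun a' _ => ?_
    by_cases hL : (outerCommonNbrs G A a a').card ≤ L
    · simp only [hL, if_true, ← Finset.card_filter]
      refine (Finset.card_le_card ?_).trans hL
      intro b hb
      exact (Finset.mem_filter.1 hb).2
    · simp [hL]
  refine (Finset.sum_le_card_nsmul _ _ _ h2).trans (le_of_eq ?_)
  rw [smul_eq_mul]; ring

/-- If `N` has mean at least `d / 3`, then the mean of `N ^ 2` is at least `d ^ 2 / 9`, so a function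
`bad` of small total is at some point at most `N ^ 2 / 16`, where moreover `N` is large. -/
theorem exists_of_average {ι : Type*} (s : Finset ι) (hs : s.Nonempty) (N bad : ι → ℕ) (d M : ℝ)
    (hd : 0 < d) (hB : 288 * d * M ^ 2 ≤ (s.card : ℝ))
    (hE : d / 3 * (s.card : ℝ) ≤ ∑ b ∈ s, (N b : ℝ))
    (hbad : ∑ b ∈ s, (bad b : ℝ) ≤ (d * M) ^ 2 * d) :
    ∃ b ∈ s, d ^ 2 / 18 ≤ (N b : ℝ) ^ 2 ∧ 16 * bad b ≤ N b ^ 2 := by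
  by_contra hcon
  push Not at hcon
  have h1 : ∀ b ∈ s, 2 * (d / 3) * (N b : ℝ) - d ^ 2 / 9 < d ^ 2 / 18 + 16 * (bad b : ℝ) := by
    intro b hb
    have h2 := hcon b hb
    have h4 : (0 : ℝ) ≤ bad b := by positivity
    have h5 : 2 * (d / 3) * (N b : ℝ) - d ^ 2 / 9 ≤ (N b : ℝ) ^ 2 := by
      linarith [sq_nonneg ((N b : ℝ) - d / 3)]
    have h7 : 0 < d ^ 2 := by positivity
    by_cases h3 : d ^ 2 / 18 ≤ (N b : ℝ) ^ 2
    · have h6 : (N b : ℝ) ^ 2 < 16 * (bad b : ℝ) := by exact_mod_cast h2 h3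
      linarith
    · push Not at h3
      linarith
  have h2 := Finset.sum_lt_sum_of_nonempty hs h1
  simp only [Finset.sum_sub_distrib, Finset.sum_add_distrib, ← Finset.mul_sum,
    Finset.sum_const, nsmul_eq_mul] at h2
  have h3 := mul_le_mul_of_nonneg_left hE hd.le
  have h4 := mul_le_mul_of_nonneg_left hB (sq_nonneg d)
  linarith

/-- Averaging over the vertices outside `A`: some `b ∉ A` has a large neighbourhood in `A`, with few
pairs having few outer common neighbours. -/
theorem exists_good_nbhd {V : Type*} [Fintype V] [DecidableEq V] (G : SimpleGraph V)
    [DecidableRel G.Adj] (A : Finset V)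
    (L : ℕ) (d M : ℝ) (hd : 0 < d) (hL : (L : ℝ) ≤ d)
    (hA : (A.card : ℝ) ≤ d * M) (hAc : 0 < Aᶜ.card)
    (hB : 288 * d * M ^ 2 ≤ (Aᶜ.card : ℝ))
    (hE : d / 3 * (Aᶜ.card : ℝ) ≤ ∑ b ∈ Aᶜ, ((A.filter (G.Adj b)).card : ℝ)) :
    ∃ b ∈ Aᶜ, d ^ 2 / 18 ≤ ((A.filter (G.Adj b)).card : ℝ) ^ 2 ∧
      16 * ∑ a ∈ A.filter (G.Adj b), ((A.filter (G.Adj b)).filter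
        fun a' => (outerCommonNbrs G A a a').card ≤ L).card ≤ (A.filter (G.Adj b)).card ^ 2 := by
  refine exists_of_average Aᶜ (Finset.card_pos.1 hAc) (fun b => (A.filter (G.Adj b)).card)
    (fun b => ∑ a ∈ A.filter (G.Adj b), ((A.filter (G.Adj b)).filter
        fun a' => (outerCommonNbrs G A a a').card ≤ L).card) d M hd hB hE ?_
  have h1 := sum_bad_le G A L
  have h2 : (A.card : ℝ) ^ 2 * L ≤ (d * M) ^ 2 * d := by gcongr
  refine le_trans ?_ h2
  exact_mod_cast h1

/-! ### Counting edges between `A` and its complement -/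

/-- The degrees of the vertices outside `A` are accounted for by edges into `A`, edges that survive
the deletion of `A` and `W`, and edges in `W`. -/
theorem cross_edges_lower {V : Type*} [Fintype V] [DecidableEq V] (G : SimpleGraph V)
    [DecidableRel G.Adj] (A : Finset V) (W : Set (Sym2 V)) (d : ℝ)
    (hdeg : ∀ v, d ≤ (G.degree v : ℝ)) :
    d * (Aᶜ.card : ℝ) ≤ ∑ b ∈ Aᶜ, ((A.filter (G.Adj b)).card : ℝ) +
      2 * (Nat.card ((G.deleteEdges W).induce (A : Set V)ᶜ).edgeSet : ℝ) + 2 * (W.ncard : ℝ) := by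
  classical
  have h1 : ∀ b ∈ Aᶜ, d ≤ ((A.filter (G.Adj b)).card : ℝ) +
      ((Aᶜ.filter ((G.deleteEdges W).Adj b)).card : ℝ) + ((fromEdgeSet W).degree b : ℝ) := by
    intro b _
    refine (hdeg b).trans ?_
    norm_cast
    rw [← card_neighborFinset_eq_degree, ← card_neighborFinset_eq_degree]
    refine le_trans (Finset.card_le_card ?_) ((Finset.card_union_le _ _).trans
      (Nat.add_le_add_right (Finset.card_union_le _ _) _))
    intro w hw
    have hw' : G.Adj b w := by simpa using hw
    have := hw'.ne
    by_cases hA : w ∈ A <;> by_cases hW : s(b, w) ∈ W <;> simp [hw', hA, hW, this]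
  have h2 := Finset.sum_le_sum h1
  simp only [Finset.sum_add_distrib, Finset.sum_const, nsmul_eq_mul] at h2
  have h3 : ∑ b ∈ Aᶜ, ((fromEdgeSet W).degree b) ≤ 2 * W.ncard := by
    refine (Finset.sum_le_sum_of_subset (Finset.subset_univ _)).trans ?_
    rw [sum_degrees_eq_twice_card_edges]
    gcongr
    rw [← Set.ncard_coe_finset]
    refine Set.ncard_le_ncard ?_ (Set.toFinite _)
    intro e he
    simp at he
    exact he.1
  have h4 : ∑ b ∈ Aᶜ, ((Aᶜ.filter ((G.deleteEdges W).Adj b)).card) =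
      2 * Nat.card ((G.deleteEdges W).induce (A : Set V)ᶜ).edgeSet := by
    rw [Nat.card_eq_fintype_card, ← edgeFinset_card, ← sum_degrees_eq_twice_card_edges]
    symm
    refine (Finset.sum_congr rfl (g := fun x : ↥((A : Set V)ᶜ) =>
      (Aᶜ.filter ((G.deleteEdges W).Adj x)).card) ?_).trans ?_
    · intro x _
      rw [← card_neighborFinset_eq_degree, ← Finset.card_map (Function.Embedding.subtype _)]
      congr 1
      ext w
      simp
      tauto
    · exact (Finset.sum_subtype Aᶜ (p := fun x => x ∈ (A : Set V)ᶜ) (by simp)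
        (fun x => (Aᶜ.filter ((G.deleteEdges W).Adj x)).card)).symm
  have h3' : ∑ b ∈ Aᶜ, ((fromEdgeSet W).degree b : ℝ) ≤ 2 * W.ncard := by exact_mod_cast h3
  have h4' : ∑ b ∈ Aᶜ, ((Aᶜ.filter ((G.deleteEdges W).Adj b)).card : ℝ) =
      2 * Nat.card ((G.deleteEdges W).induce (A : Set V)ᶜ).edgeSet := by exact_mod_cast h4
  linarith

/-! ### The choice of the threshold -/

/-- The quantity `m` is polylogarithmic in `y = n / d`, so a fixed power of it is eventually at most
a constant multiple of `y`. -/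
theorem exists_threshold (ε₁ ε₂ : ℝ) (h1 : 0 < ε₁) (h1' : ε₁ < 1) (h2 : 0 < ε₂) :
    ∃ K : ℝ, 0 < K ∧ ∀ y : ℝ, K < y → 1 ≤ 2 / ε₁ * Real.log (15 * y / ε₂) ^ 3 ∧
      1000 * ((2 / ε₁ * Real.log (15 * y / ε₂) ^ 3) ^ 100) ^ 2 ≤ y := by
  have hlim : Filter.Tendsto (fun y : ℝ => 15 * y / ε₂) Filter.atTop Filter.atTop := by
    have : (fun y : ℝ => 15 * y / ε₂) = fun y => (15 / ε₂) * y := by ext; ring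
    rw [this]
    exact Filter.tendsto_id.const_mul_atTop (by positivity)
  have ho := (Real.isLittleO_pow_log_id_atTop (n := 600)).comp_tendsto hlim
  have hC : 0 < ε₂ / (15 * (1000 * (2 / ε₁) ^ 200)) := by positivity
  have hev := (ho.bound hC).and ((Filter.eventually_gt_atTop 1).and
    (hlim.eventually (Filter.eventually_ge_atTop (Real.exp 1))))
  obtain ⟨K, hK⟩ := Filter.eventually_atTop.1 hev
  refine ⟨max K 1, by positivity, fun y hy => ?_⟩
  obtain ⟨ha, hb, hc⟩ := hK y ((le_max_left _ _).trans hy.le)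
  have hl : 1 ≤ Real.log (15 * y / ε₂) := by
    rw [Real.le_log_iff_exp_le (by positivity)]; exact hc
  have hy0 : 0 < y := by linarith
  constructor
  · have : 1 ≤ 2 / ε₁ := by rw [le_div_iff₀ h1]; linarith
    exact one_le_mul_of_one_le_of_one_le this (one_le_pow₀ hl)
  · simp only [Function.comp, id, Real.norm_eq_abs] at ha
    rw [abs_of_nonneg (by positivity), abs_of_nonneg (by positivity)] at ha
    calc 1000 * ((2 / ε₁ * Real.log (15 * y / ε₂) ^ 3) ^ 100) ^ 2
        = (1000 * (2 / ε₁) ^ 200) * Real.log (15 * y / ε₂) ^ 600 := by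
          rw [← pow_mul, mul_pow, ← pow_mul]; ring
      _ ≤ (1000 * (2 / ε₁) ^ 200) * (ε₂ / (15 * (1000 * (2 / ε₁) ^ 200)) * (15 * y / ε₂)) := by
          gcongr
      _ = y := by field_simp

/-- a K^{(3)}-immersion-free graph of minimum degree d is robustly dense. -/
theorem dense_of_balanced_immersion_free (ε₁ ε₂ : ℝ)
    (hε₁0 : 0 < ε₁) (hε₁1 : ε₁ < 1) (hε₂0 : 0 < ε₂) (hε₂1 : ε₂ < 1) :
    ∃ c : ℝ, 0 < c ∧ ∃ K : ℝ, 0 < K ∧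
      ∀ (n : ℕ) (d : ℝ) (V : Type) [Fintype V] (G : SimpleGraph V),
        Fintype.card V = n → K < (n : ℝ) / d →
        (minDeg G : ℝ) = d →
        ¬ HasBalancedCliqueImmersion G ⌈c * d⌉₊ 3 →
        ∀ x : ℕ, 0 < x → x < 100 →
          GraphDense G (d * mParam ε₁ ε₂ n d ^ x) (d ^ 2 * mParam ε₁ ε₂ n d ^ x) (d / 2) := by
  obtain ⟨K, hK0, hK⟩ := exists_threshold ε₁ ε₂ hε₁0 hε₁1 hε₂0
  refine ⟨1 / 1000, by norm_num, K, hK0, ?_⟩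
  intro n d V _ G hn hnd hmin hno x hx0 hx U hU W hW hWc
  classical
  have hd0 : 0 < d := by
    rcases (show (0 : ℝ) ≤ d by rw [← hmin]; positivity).lt_or_eq with h | h
    · exact h
    · rw [← h] at hnd; simp at hnd; linarith
  have hn0 : 0 < n := by
    rcases Nat.eq_zero_or_pos n with h | h
    · rw [h] at hnd; simp at hnd; linarith
    · exact h
  obtain ⟨v₀⟩ : Nonempty V := Fintype.card_pos_iff.1 (hn ▸ hn0)
  -- A clique on at most one vertex is immersed trivially, so `d` is large.
  have hdbig : 1000 < d := by
    by_contra hle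
    push Not at hle
    have ht : ⌈1 / 1000 * d⌉₊ ≤ 1 := by
      rw [Nat.ceil_le]; push_cast; linarith
    have hss : ∀ i j : Fin ⌈1 / 1000 * d⌉₊, ¬ i < j := by intro i j h; omega
    have hinj : Function.Injective fun _ : Fin ⌈1 / 1000 * d⌉₊ => v₀ := by
      intro i j _; omega
    exact hno ⟨fun _ => v₀, hinj, fun i j h => absurd h (hss i j),
      fun i j h => absurd h (hss i j), fun i j h => absurd h (hss i j)⟩
  set m := mParam ε₁ ε₂ n d with hm
  have hmeq : m = 2 / ε₁ * Real.log (15 * (n / d) / ε₂) ^ 3 := by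
    rw [hm, mParam]
    congr 3
    field_simp
  obtain ⟨hm1, hm2⟩ := hK _ hnd
  rw [← hmeq] at hm1 hm2
  set M := m ^ x with hMdef
  have hM1 : 1 ≤ M := one_le_pow₀ hm1
  have hbig : 1000 * d * M ^ 2 ≤ n := by
    have h1 : M ≤ m ^ 100 := pow_le_pow_right₀ hm1 hx.le
    have h2 : 1000 * M ^ 2 ≤ n / d := le_trans (by gcongr) hm2
    rw [le_div_iff₀ hd0] at h2
    linarith
  have hMM : M ≤ M ^ 2 := by nlinarith
  obtain ⟨A, rfl⟩ : ∃ A : Finset V, (A : Set V) = U := ⟨U.toFinset, by simp⟩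
  rw [Set.ncard_coe_finset] at hU
  have hAB : (A.card : ℝ) + Aᶜ.card = n := by
    rw [← hn]; exact_mod_cast Finset.card_add_card_compl A
  have hdMM : d * M ≤ d * M ^ 2 := by gcongr
  have hdM : 0 < d * M := by positivity
  have hB : 288 * d * M ^ 2 ≤ (Aᶜ.card : ℝ) := by linarith
  have hAc : (0 : ℝ) < Aᶜ.card := by nlinarith
  by_contra hcon
  push Not at hcon
  refine hno ?_
  have hdeg : ∀ v, d ≤ (G.degree v : ℝ) := by
    intro v
    rw [← hmin, ← card_neighborSet_eq_degree, ← Nat.card_eq_fintype_card]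
    exact_mod_cast Nat.sInf_le (Set.mem_range_self v)
  have hcross := cross_edges_lower G A W d hdeg
  have hcard : Nat.card ↥((A : Set V)ᶜ) = Aᶜ.card := by
    rw [← Finset.coe_compl, Nat.card_coe_set_eq, Set.ncard_coe_finset]
  rw [avgDeg, hcard, div_lt_iff₀ hAc] at hcon
  have hE : d / 3 * (Aᶜ.card : ℝ) ≤ ∑ b ∈ Aᶜ, ((A.filter (G.Adj b)).card : ℝ) := by
    have h1 : 12 * (d * M) ≤ Aᶜ.card := by linarith
    have h2 := mul_le_mul_of_nonneg_left h1 hd0.le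
    nlinarith
  set t := ⌈1 / 1000 * d⌉₊ with ht
  have ht1 : 1 ≤ t := Nat.one_le_ceil_iff.2 (by positivity)
  have htd : (t : ℝ) < 1 / 1000 * d + 1 := Nat.ceil_lt_add_one (by positivity)
  obtain ⟨b, hb, hb1, hb2⟩ := exists_good_nbhd G A (4 * t) d M hd0
    (by push_cast; linarith) hU (by exact_mod_cast hAc) hB hE
  refine immersion_of_few_bad G A _ (Finset.filter_subset _ _) t ht1 ?_ hb2
  have h5 : d / 5 ≤ ((A.filter (G.Adj b)).card : ℝ) :=
    le_of_sq_le_sq (by nlinarith) (by positivity)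
  have h6 : (100 * t : ℝ) ≤ ((A.filter (G.Adj b)).card : ℝ) := by linarith
  exact_mod_cast h6
end

section
/- Let H = (A, B; E) be a bipartite graph with edge density α, and write n₁ = |A| and n₂ = |B|. Then H contains a K_p^{(3)}-immersion for every positive integer p with p ≤ min{α n₁/16, α² n₂/192}. -/
/-!
The branch vertices are found by dependent random choice. Write `n₁ = #A`, `n₂ = #B`, let `d b` be
the degree of `b ∈ B`, and
call a pair of vertices of `A` bad if it has fewer than `6 p` common neighbours. By Cauchy–Schwarz
the sum of `d b ^ 2` over `B` is at least `α² n₁² n₂`, while each of the at most `n₁²` bad pairs lies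
in fewer than `6 p ≤ α² n₂ / 32` neighbourhoods. So some `b` has a neighbourhood `S` with
`#S ^ 2 ≥ α² n₁² / 2 ≥ 128 p ^ 2`, of which at most a sixteenth of the ordered pairs are bad
(`exists_nbhd_few_bad`). At least half of `S`, hence at least `p` vertices, then have at most
`#S / 8` bad partners (`exists_subset_few_bad`); `p` such vertices are the branch vertices.

The path for a pair `i < j` is `φ i, b₁, w, b₂, φ j` with `w ∈ S` and `b₁, b₂ ∈ B`. Both stages of
the choice are instances of greedy list colouring (`exists_greedy_choice`).

* The middle vertex `w` avoids the branch vertices and the bad partners of `φ i` and `φ j`, which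
  leaves at least `#S - p - #S / 4 > p` candidates. Pairs with the same smaller index `i` get
  distinct middle vertices, so each vertex is the middle of at most `p` paths.
* The path splits at `w` into two halves, and each half chooses its vertex of `B` among at least
  `6 p` common neighbours of `w` and its branch vertex. It must differ from the choices of the at
  most `2 p` halves at the same branch vertex and the at most `2 p` halves at the same `w`.

Two halves sharing an edge would share its end in `B`, and also its end in `A`, which is a branch
vertex for both or a middle vertex for both; the second choice excludes this
(`immersion_of_few_bad`).
-/

open SimpleGraph

/-! ### Greedy list colouring -/

/-- List colouring by the greedy algorithm: if every list `L i` is longer than the number of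
conflicts of `i`, then each `i` can choose an element of its list so that distinct conflicting
indices choose distinct elements. -/
lemma exists_greedy_choice {I W : Type*} [Fintype I] [DecidableEq I] [DecidableEq W]
    (R : I → I → Prop) [∀ i j, Decidable (R i j)] (hR : ∀ i j, R i j → R j i)
    (L : I → Finset W)
    (h : ∀ i, (Finset.univ.filter fun j => R i j).card < (L i).card) :
    ∃ f : I → W, (∀ i, f i ∈ L i) ∧ ∀ i j, i ≠ j → R i j → f i ≠ f j := by
  have hne : ∀ i, ∃ x, x ∈ L i := fun i => Finset.card_pos.1 (by have := h i; omega)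
  have key : ∀ s : Finset I, ∃ f : I → W, (∀ i, f i ∈ L i) ∧
      ∀ i ∈ s, ∀ j ∈ s, i ≠ j → R i j → f i ≠ f j := by
    intro s
    induction s using Finset.induction_on with
    | empty =>
      choose f hf using hne
      exact ⟨f, hf, by simp⟩
    | insert a s ha ih =>
      obtain ⟨f, hf, hfs⟩ := ih
      have hlt : ((Finset.univ.filter fun j => R a j).image f).card < (L a).card :=
        lt_of_le_of_lt Finset.card_image_le (h a)
      obtain ⟨x, hx, hx'⟩ := Finset.exists_mem_notMem_of_card_lt_card hlt
      have hxR : ∀ j, R a j → x ≠ f j := by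
        rintro j hj rfl
        exact hx' (Finset.mem_image_of_mem f (by simpa using hj))
      refine ⟨Function.update f a x, ?_, ?_⟩
      · intro i
        by_cases hi : i = a
        · subst hi; simpa using hx
        · simpa [hi] using hf i
      · intro i hi j hj hij hRij
        rw [Finset.mem_insert] at hi hj
        by_cases hia : i = a
        · subst hia
          simpa [Ne.symm hij] using hxR j hRij
        · by_cases hja : j = a
          · subst hja
            simpa [hia] using (hxR i (hR _ _ hRij)).symm
          · simpa [hia, hja] using
              hfs i (hi.resolve_left hia) j (hj.resolve_left hja) hij hRij
  obtain ⟨f, hf, hff⟩ := key Finset.univ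
  exact ⟨f, hf, fun i j => hff i (Finset.mem_univ _) j (Finset.mem_univ _)⟩

/-! ### Dependent random choice -/

/-- The number of common neighbours of `a` and `a'` in `B`. -/
noncomputable def codeg {V : Type*} (G : SimpleGraph V) (B : Finset V) (a a' : V) : ℕ :=
  open Classical in (B.filter fun b => G.Adj a b ∧ G.Adj a' b).card

open Classical in
/-- Dependent random choice by averaging over `b ∈ B`: the second moment of the degree is at least
the square of its mean, while a pair `(a, a')` with fewer than `6 p` common neighbours lies in the
neighbourhood of fewer than `6 p` vertices `b`. -/
lemma exists_nbhd_few_bad {V : Type*} (G : SimpleGraph V) (A B : Finset V) (α : ℝ) (p : ℕ)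
    (hp : 0 < p) (hB : 0 < B.card)
    (he : ∑ b ∈ B, ((A.filter fun a => G.Adj a b).card : ℝ) = α * A.card * B.card)
    (h1 : 16 * (p : ℝ) ≤ α * A.card) (h2 : 192 * (p : ℝ) ≤ α ^ 2 * B.card) :
    ∃ b ∈ B, 11 * p ≤ (A.filter fun a => G.Adj a b).card ∧
      16 * ∑ a ∈ A.filter fun a => G.Adj a b,
        ((A.filter fun a => G.Adj a b).filter fun a' => codeg G B a a' < 6 * p).card
        ≤ (A.filter fun a => G.Adj a b).card ^ 2 := by
  set S : V → Finset V := fun b => A.filter fun a => G.Adj a b with hS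
  set Y : V → ℕ := fun b => ∑ a ∈ S b, ((S b).filter fun a' => codeg G B a a' < 6 * p).card
    with hY
  have hYsum : ∑ b ∈ B, Y b ≤ 6 * p * A.card ^ 2 := by
    have hYb : ∀ b, Y b = ∑ a ∈ A, ∑ a' ∈ A,
        if codeg G B a a' < 6 * p then (if G.Adj a b ∧ G.Adj a' b then 1 else 0) else 0 := by
      intro b
      simp only [hY, hS, Finset.card_filter, Finset.sum_filter]
      refine Finset.sum_congr rfl fun a _ => ?_
      split_ifs with hab
      · refine Finset.sum_congr rfl fun a' _ => ?_
        split_ifs <;> simp_all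
      · exact (Finset.sum_eq_zero fun a' _ => by simp [hab]).symm
    simp_rw [hYb]
    rw [Finset.sum_comm]
    have : ∀ a ∈ A, (∑ b ∈ B, ∑ a' ∈ A,
        if codeg G B a a' < 6 * p then (if G.Adj a b ∧ G.Adj a' b then 1 else 0) else 0)
        ≤ A.card * (6 * p) := by
      intro a _
      rw [Finset.sum_comm]
      refine (Finset.sum_le_card_nsmul _ _ (6 * p) fun a' _ => ?_).trans_eq (smul_eq_mul _ _)
      by_cases hc : codeg G B a a' < 6 * p
      · simp only [hc, if_true]
        rw [← Finset.card_filter]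
        exact hc.le
      · simp [hc]
    refine (Finset.sum_le_card_nsmul _ _ _ this).trans_eq ?_
    rw [smul_eq_mul]; ring
  have hp' : (0 : ℝ) < p := by exact_mod_cast hp
  have hB' : (0 : ℝ) < B.card := by exact_mod_cast hB
  have hYsum' : ∑ b ∈ B, (Y b : ℝ) ≤ 6 * p * (A.card : ℝ) ^ 2 := by exact_mod_cast hYsum
  have hsq : α ^ 2 * (A.card : ℝ) ^ 2 * B.card ≤ ∑ b ∈ B, ((S b).card : ℝ) ^ 2 := by
    have := sq_sum_le_card_mul_sum_sq (s := B) (f := fun b => ((S b).card : ℝ))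
    rw [he] at this
    refine le_of_mul_le_mul_left (le_trans (le_of_eq ?_) this) hB'
    ring
  have hex : ∃ b ∈ B, α ^ 2 * (A.card : ℝ) ^ 2 / 2 ≤ ((S b).card : ℝ) ^ 2 - 16 * Y b := by
    by_contra! hcon
    have hlt := Finset.sum_lt_sum_of_nonempty (Finset.card_pos.1 hB) hcon
    rw [Finset.sum_sub_distrib, ← Finset.mul_sum, Finset.sum_const, nsmul_eq_mul] at hlt
    have := mul_le_mul_of_nonneg_right h2 (sq_nonneg (A.card : ℝ))
    nlinarith
  obtain ⟨b, hb, hbb⟩ := hex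
  have h128 : 128 * (p : ℝ) ^ 2 ≤ α ^ 2 * (A.card : ℝ) ^ 2 / 2 := by nlinarith
  refine ⟨b, hb, ?_, ?_⟩
  · have hY0 : (0 : ℝ) ≤ Y b := Nat.cast_nonneg _
    have : (11 * (p : ℝ)) ≤ (S b).card := by
      refine (sq_le_sq₀ (by positivity) (Nat.cast_nonneg _)).1 ?_
      nlinarith
    exact_mod_cast this
  · have : 16 * (Y b : ℝ) ≤ ((S b).card : ℝ) ^ 2 := by nlinarith [sq_nonneg (p : ℝ)]
    exact_mod_cast this

/-- By Markov's inequality, if at most a sixteenth of the ordered pairs from `S` satisfy `bad`,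
then at least half of the elements of `S` have at most `#S / 8` bad partners. -/
lemma exists_subset_few_bad {V : Type*} (S : Finset V) (bad : V → V → Prop)
    [∀ a a', Decidable (bad a a')] (p : ℕ)
    (hS : 11 * p ≤ S.card)
    (hbad : 16 * ∑ a ∈ S, (S.filter fun a' => bad a a').card ≤ S.card ^ 2) :
    ∃ P ⊆ S, P.card = p ∧ ∀ a ∈ P, 8 * (S.filter fun a' => bad a a').card ≤ S.card := by
  set T := S.filter fun a => 8 * (S.filter fun a' => bad a a').card ≤ S.card with hT
  set U := S.filter fun a => ¬ 8 * (S.filter fun a' => bad a a').card ≤ S.card with hU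
  have hTU : T.card + U.card = S.card := Finset.card_filter_add_card_filter_not _
  have hUs : U.card * S.card ≤ 8 * ∑ a ∈ S, (S.filter fun a' => bad a a').card := by
    rw [Finset.mul_sum]
    refine le_trans ?_ (Finset.sum_le_sum_of_subset (Finset.filter_subset _ _ : U ⊆ S))
    rw [← smul_eq_mul]
    refine Finset.card_nsmul_le_sum _ _ _ fun a ha => ?_
    have := (Finset.mem_filter.1 ha).2
    omega
  have h2U : 2 * U.card ≤ S.card := by
    rcases Nat.eq_zero_or_pos S.card with h0 | hpos
    · omega
    · refine Nat.le_of_mul_le_mul_right ?_ hpos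
      nlinarith
  obtain ⟨P, hPT, hPc⟩ := Finset.exists_subset_card_eq (show p ≤ T.card by omega)
  exact ⟨P, hPT.trans (Finset.filter_subset _ _), hPc, fun a ha => (Finset.mem_filter.1 (hPT ha)).2⟩

/-! ### Construction of the paths -/

/-- The unordered pairs of branch vertices, each listed once. -/
abbrev BranchPair (p : ℕ) := {q : Fin p × Fin p // q.1 < q.2}

/-- An element of `BranchPair p × Bool` stands for one half of the path of a pair: the half at its
smaller end for `false`, at its larger end for `true`. This is the branch vertex of that half. -/
def BranchPair.pick {p : ℕ} (h : BranchPair p × Bool) : Fin p :=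
  if h.2 then h.1.1.2 else h.1.1.1

lemma card_pairs_fst_le {p : ℕ} (i : Fin p) :
    (Finset.univ.filter fun q : BranchPair p => i = q.1.1).card ≤ p := by
  calc _ ≤ (Finset.univ : Finset (Fin p)).card := by
        refine Finset.card_le_card_of_injOn (fun q => q.1.2) (by simp) ?_
        intro q hq q' hq' h
        simp only [Finset.coe_filter, Finset.mem_univ, true_and, Set.mem_ofPred_eq] at hq hq'
        exact Subtype.ext (Prod.ext (hq.symm.trans hq') h)
    _ = p := by simp

lemma card_halves_pick_le {p : ℕ} (i : Fin p) :
    (Finset.univ.filter fun h : BranchPair p × Bool => i = BranchPair.pick h).card ≤ 2 * p := by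
  calc _ ≤ (Finset.univ : Finset (Bool × Fin p)).card := by
        refine Finset.card_le_card_of_injOn (fun h => (h.2, BranchPair.pick (h.1, !h.2)))
          (by simp) ?_
        rintro ⟨⟨⟨a, b⟩, hq⟩, s⟩ hh ⟨⟨⟨a', b'⟩, hq'⟩, s'⟩ hh' h
        simp only [Finset.coe_filter, Finset.mem_univ, true_and, Set.mem_ofPred_eq] at hh hh'
        cases s <;> cases s' <;> simp_all [BranchPair.pick]
    _ = 2 * p := by simp

/-- The number of halves with a given middle vertex, when pairs with the same smaller end have
distinct middle vertices. -/
lemma card_halves_mid_le {V : Type*} [DecidableEq V] {p : ℕ} (w : BranchPair p → V)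
    (hw : ∀ q q', q ≠ q' → q.1.1 = q'.1.1 → w q ≠ w q') (x : V) :
    (Finset.univ.filter fun h : BranchPair p × Bool => x = w h.1).card ≤ 2 * p := by
  calc _ ≤ (Finset.univ : Finset (Bool × Fin p)).card := by
        refine Finset.card_le_card_of_injOn (fun h => (h.2, h.1.1.1)) (by simp) ?_
        rintro ⟨q, s⟩ hh ⟨q', s'⟩ hh' h
        simp only [Finset.coe_filter, Finset.mem_univ, true_and, Set.mem_ofPred_eq] at hh hh'
        simp only [Prod.mk.injEq] at h
        refine Prod.ext ?_ h.1
        by_contra hne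
        exact hw q q' hne h.2 (hh.symm.trans hh')
    _ = 2 * p := by simp

lemma exists_path_length_four {V : Type*} {G : SimpleGraph V} {a b c d e : V}
    (hab : G.Adj a b) (hcb : G.Adj c b) (hcd : G.Adj c d) (hed : G.Adj e d)
    (hac : a ≠ c) (had : a ≠ d) (hae : a ≠ e) (hbd : b ≠ d) (hbe : b ≠ e) (hce : c ≠ e) :
    ∃ P : G.Walk a e, (P.IsPath ∧ P.length = 3 + 1) ∧
      ∀ x ∈ P.edges, x = s(a, b) ∨ x = s(c, b) ∨ x = s(c, d) ∨ x = s(e, d) := by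
  refine ⟨Walk.cons hab (Walk.cons hcb.symm (Walk.cons hcd (Walk.cons hed.symm Walk.nil))),
    ⟨?_, by simp⟩, ?_⟩
  · rw [Walk.isPath_def]
    simp [hab.ne, hcb.ne', hcd.ne, hed.ne', hac, had, hae, hbd, hbe, hce]
  · intro x hx
    simpa [Sym2.eq_swap (a := b) (b := c), Sym2.eq_swap (a := d) (b := e)] using hx

open Classical in
/-- The immersion, built from branch vertices `φ` in a set `S ⊆ A` in which each of them has few
partners of small codegree: choose the middle vertices of the paths greedily, then the vertices
in `B`. -/
lemma immersion_of_few_bad_s6 {V : Type*} (G : SimpleGraph V) (A B S : Finset V)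
    (hdisj : Disjoint A B) (hSA : S ⊆ A) (p : ℕ) (hp : 0 < p) (hS : 11 * p ≤ S.card)
    (φ : Fin p → V) (hφ : Function.Injective φ) (hφS : ∀ i, φ i ∈ S)
    (hφbad : ∀ i, 8 * (S.filter fun a' => codeg G B (φ i) a' < 6 * p).card ≤ S.card) :
    HasBalancedCliqueImmersion G p 3 := by
  set bad : Fin p → Finset V := fun i => S.filter fun a' => codeg G B (φ i) a' < 6 * p with hbad
  set L : BranchPair p → Finset V := fun q =>
    S \ (Finset.univ.image φ ∪ (bad q.1.1 ∪ bad q.1.2)) with hL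
  have hLcard : ∀ q, (Finset.univ.filter fun q' : BranchPair p => q.1.1 = q'.1.1).card
      < (L q).card := by
    intro q
    have h1 := card_pairs_fst_le q.1.1
    have h2 : S.card ≤ (L q).card + (Finset.univ.image φ ∪ (bad q.1.1 ∪ bad q.1.2)).card := by
      have := Finset.le_card_sdiff (Finset.univ.image φ ∪ (bad q.1.1 ∪ bad q.1.2)) S
      simp only [hL]; omega
    have h3 := Finset.card_union_le (Finset.univ.image φ) (bad q.1.1 ∪ bad q.1.2)
    have h4 := Finset.card_union_le (bad q.1.1) (bad q.1.2)
    have h5 : (Finset.univ.image φ).card ≤ p := Finset.card_image_le.trans (by simp)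
    have h6 := hφbad q.1.1
    have h7 := hφbad q.1.2
    simp only [hbad] at *
    omega
  obtain ⟨w, hwL, hw⟩ := exists_greedy_choice
    (fun q q' : BranchPair p => q.1.1 = q'.1.1) (fun _ _ h => h.symm) L hLcard
  have hwS : ∀ q, w q ∈ S := fun q => (Finset.mem_sdiff.1 (hwL q)).1
  have hwφ : ∀ q i, φ i ≠ w q := by
    intro q i h
    refine (Finset.mem_sdiff.1 (hwL q)).2 (Finset.mem_union_left _ ?_)
    exact Finset.mem_image.2 ⟨i, Finset.mem_univ _, h⟩
  have hwcod : ∀ h : BranchPair p × Bool,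
      6 * p ≤ codeg G B (φ (BranchPair.pick h)) (w h.1) := by
    rintro ⟨q, s⟩
    have hq := (Finset.mem_sdiff.1 (hwL q)).2
    simp only [hbad, Finset.mem_union, Finset.mem_filter, hwS q, true_and, not_or, not_lt] at hq
    cases s
    · exact hq.2.1
    · exact hq.2.2
  obtain ⟨f, hfL, hf⟩ := exists_greedy_choice
    (fun h h' : BranchPair p × Bool =>
      BranchPair.pick h = BranchPair.pick h' ∨ w h.1 = w h'.1)
    (fun _ _ h => h.imp Eq.symm Eq.symm)
    (fun h => B.filter fun b => G.Adj (φ (BranchPair.pick h)) b ∧ G.Adj (w h.1) b) (by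
      intro h
      have h1 := card_halves_pick_le (BranchPair.pick h)
      have h2 := card_halves_mid_le w hw (w h.1)
      have h3 := hwcod h
      rw [Finset.filter_or]
      refine (Finset.card_union_le _ _).trans_lt (lt_of_lt_of_le ?_ h3)
      omega)
  have hfB : ∀ h, f h ∈ B := fun h => (Finset.mem_filter.1 (hfL h)).1
  have hfφ : ∀ h, G.Adj (φ (BranchPair.pick h)) (f h) := fun h => (Finset.mem_filter.1 (hfL h)).2.1
  have hfw : ∀ h, G.Adj (w h.1) (f h) := fun h => (Finset.mem_filter.1 (hfL h)).2.2
  have hAB : ∀ x ∈ S, ∀ y ∈ B, x ≠ y := fun x hx y hy h =>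
    Finset.disjoint_left.1 hdisj (hSA hx) (h ▸ hy)
  have hpath : ∀ i j (h : i < j), ∃ P : G.Walk (φ i) (φ j), (P.IsPath ∧ P.length = 3 + 1) ∧
      ∀ e ∈ P.edges, ∃ s, e = s(φ (BranchPair.pick (⟨(i, j), h⟩, s)), f (⟨(i, j), h⟩, s)) ∨
        e = s(w ⟨(i, j), h⟩, f (⟨(i, j), h⟩, s)) := by
    intro i j h
    obtain ⟨P, hP, hPe⟩ := exists_path_length_four
      (hfφ (⟨(i, j), h⟩, false)) (hfw (⟨(i, j), h⟩, false))
      (hfw (⟨(i, j), h⟩, true)) (hfφ (⟨(i, j), h⟩, true))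
      (hwφ _ _) (hAB _ (hφS _) _ (hfB _)) (fun e => h.ne (hφ e)) (hf _ _ (by simp) (Or.inr rfl))
      (hAB _ (hφS _) _ (hfB _)).symm (hwφ _ _).symm
    refine ⟨P, hP, fun e he => ?_⟩
    rcases hPe e he with he | he | he | he
    · exact ⟨false, Or.inl he⟩
    · exact ⟨false, Or.inr he⟩
    · exact ⟨true, Or.inr he⟩
    · exact ⟨true, Or.inl he⟩
  choose P hP hform using hpath
  refine ⟨φ, hφ, P, hP, ?_⟩
  -- An edge shared by two paths is used by a half of each; the two halves are in conflict.
  have hsplit : ∀ x ∈ S, ∀ x' ∈ S, ∀ g g', s(x, f g) = s(x', f g') → x = x' ∧ f g = f g' := by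
    intro x hx x' hx' g g' h
    rcases Sym2.eq_iff.1 h with h | h
    · exact h
    · exact absurd h.1 (hAB x hx _ (hfB g'))
  intro i j h i' j' h' hne e he he'
  obtain ⟨s, hs⟩ := hform i j h e he
  obtain ⟨s', hs'⟩ := hform i' j' h' e he'
  have hgg : ((⟨(i, j), h⟩, s) : BranchPair p × Bool) ≠ (⟨(i', j'), h'⟩, s') := by
    intro hg
    exact hne (congrArg (fun g : BranchPair p × Bool => g.1.1) hg)
  rcases hs with rfl | rfl <;> rcases hs' with hs' | hs'
  · obtain ⟨h1, h2⟩ := hsplit _ (hφS _) _ (hφS _) _ _ hs'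
    exact hf _ _ hgg (Or.inl (hφ h1)) h2
  · exact hwφ _ _ (hsplit _ (hφS _) _ (hwS _) _ _ hs').1
  · exact hwφ _ _ (hsplit _ (hwS _) _ (hφS _) _ _ hs').1.symm
  · obtain ⟨h1, h2⟩ := hsplit _ (hwS _) _ (hwS _) _ _ hs'
    exact hf _ _ hgg (Or.inr h1) h2

/-! ### Immersions in dense bipartite graphs -/

/-- K_p^{(3)}-immersions in bipartite graphs of given edge density. -/
theorem balanced_immersion_in_bipartite (V : Type) [Fintype V] [DecidableEq V]
    (G : SimpleGraph V) (A B : Finset V)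
    (hdisj : Disjoint A B) (hcover : A ∪ B = Finset.univ)
    (hbip : ∀ u v : V, G.Adj u v → (u ∈ A ∧ v ∈ B) ∨ (u ∈ B ∧ v ∈ A))
    (α : ℝ) (hα : α = (Nat.card G.edgeSet : ℝ) / ((A.card : ℝ) * (B.card : ℝ)))
    (p : ℕ) (hp : 0 < p)
    (hple : (p : ℝ) ≤ min (α * (A.card : ℝ) / 16) (α ^ 2 * (B.card : ℝ) / 192)) :
    HasBalancedCliqueImmersion G p 3 := by
  classical
  have hB : 0 < B.card := by
    rcases Nat.eq_zero_or_pos B.card with h | h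
    · have : (p : ℝ) ≤ 0 := by simpa [h] using hple.trans (min_le_right _ _)
      exact absurd this (not_le.2 (by exact_mod_cast hp))
    · exact h
  have hA : 0 < A.card := by
    rcases Nat.eq_zero_or_pos A.card with h | h
    · have : (p : ℝ) ≤ 0 := by simpa [h] using hple.trans (min_le_left _ _)
      exact absurd this (not_le.2 (by exact_mod_cast hp))
    · exact h
  have hB' : (B.card : ℝ) ≠ 0 := by exact_mod_cast hB.ne'
  have hA' : (A.card : ℝ) ≠ 0 := by exact_mod_cast hA.ne'
  have hbw : G.IsBipartiteWith (A : Set V) (B : Set V) :=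
    ⟨by exact_mod_cast hdisj, fun u v h => by simpa using hbip u v h⟩
  have he : ∑ b ∈ B, ((A.filter fun a => G.Adj a b).card : ℝ) = α * A.card * B.card := by
    have h1 : ∑ b ∈ B, (A.filter fun a => G.Adj a b).card = Nat.card G.edgeSet := by
      rw [Nat.card_eq_fintype_card, ← SimpleGraph.edgeFinset_card,
        ← isBipartiteWith_sum_degrees_eq_card_edges' hbw]
      refine Finset.sum_congr rfl fun b hb => ?_
      rw [← card_neighborFinset_eq_degree, isBipartiteWith_neighborFinset' hbw (by exact_mod_cast hb)]
    rw [← Nat.cast_sum, h1, hα]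
    field_simp
  have h1 := hple.trans (min_le_left _ _)
  have h2 := hple.trans (min_le_right _ _)
  obtain ⟨b, -, hS, hbad⟩ := exists_nbhd_few_bad G A B α p hp hB he (by linarith) (by linarith)
  obtain ⟨P, hPS, hPc, hP⟩ := exists_subset_few_bad _ (fun a a' => codeg G B a a' < 6 * p) p hS hbad
  let φ := (P.equivFinOfCardEq hPc).symm
  exact immersion_of_few_bad_s6 G A B _ hdisj (Finset.filter_subset _ _) p hp hS
    (fun i => (φ i : V)) (Subtype.val_injective.comp φ.injective)
    (fun i => hPS (φ i).2) (fun i => hP _ (φ i).2)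
end

section
/- There exist constants 0 < ε₁, ε₂ < 1 such that every graph G with average degree d(G) ≥ 8d has a bipartite subgraph G' which is an (ε₁, ε₂d)-robust-expander with average degree d(G') ≥ 2d and minimum degree δ(G') ≥ d. -/
/-!
The expander is an induced subgraph of a bipartite subgraph `B ≤ G` that keeps at least half of the
edges (`exists_bipartite_half`). Fix `k > 0` and an increasing weight `w` with values in `[1/2, 1]`,
and choose a nonempty vertex set `S` maximising `e(B[S]) / (|S| w(|S|))`; write `n = |S|`.

* Since `1/2 ≤ w ≤ 1`, maximality against the whole vertex set costs at most a factor `2` in the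
  average degree.
* Maximality against `S \ {v}` and monotonicity of `w` give `deg v ≥ e(B[S]) / n`, half of the
  average degree.
* Suppose `X ⊆ S` with `|X| ≤ n / 2` has fewer than `ρ|X|` neighbours after the deletion of `F`, and
  let `Y` be `X` together with these neighbours. Each edge of `B[S]` lies in `Y`, in `S \ X`, or in
  `F`. Bounding the first two numbers by maximality gives `(1 - 2ρ) w(n) ≤ (1 + ρ) w(|Y|)`, which is
  false because `|Y| ≤ 3|X|/2`, `n ≥ 2|X|`, and the increments of `w` over a constant factor
  dominate `ρ`. The choice `w(z) = 1 - 1 / log (15 z / k)` has this property, its increments being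
  of order `1 / log²` (`wt_gap`).

Edges are counted as ordered adjacent pairs (`pairs`), so `avgDeg` is the number of pairs divided by
the number of vertices.
-/

open SimpleGraph

open Classical in
/-- The ordered pairs of adjacent vertices of `B` inside `S`: twice the number of edges of `B[S]`. -/
noncomputable def pairs {V : Type*} (B : SimpleGraph V) (S : Finset V) : Finset (V × V) :=
  (S ×ˢ S).filter fun p => B.Adj p.1 p.2

/-- The weight `1 - 1 / log (15 z / k)`, extended by a constant to `z < k / 2`, which keeps the
logarithm at least `2`. -/
noncomputable def wt (k z : ℝ) : ℝ := 1 - 1 / Real.log (15 * max z (k / 2) / k)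

/-! ### The weight function -/

lemma two_le_log {k z : ℝ} (hk : 0 < k) (hz : k / 2 ≤ z) : 2 ≤ Real.log (15 * z / k) := by
  have h1 : (15 / 2 : ℝ) ≤ 15 * z / k := by
    rw [le_div_iff₀ hk]; linarith
  rw [Real.le_log_iff_exp_le (by linarith)]
  have h2 : Real.exp 2 = Real.exp 1 * Real.exp 1 := by rw [← Real.exp_add]; norm_num
  have := Real.exp_one_lt_d9
  have := Real.exp_pos 1
  rw [h2]; nlinarith

lemma wt_le_one {k : ℝ} (hk : 0 < k) (z : ℝ) : wt k z ≤ 1 := by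
  have := two_le_log hk (le_max_right z (k / 2))
  unfold wt
  have : 0 ≤ 1 / Real.log (15 * max z (k / 2) / k) := by positivity
  linarith

lemma half_le_wt {k : ℝ} (hk : 0 < k) (z : ℝ) : 1 / 2 ≤ wt k z := by
  have := two_le_log hk (le_max_right z (k / 2))
  unfold wt
  have : 1 / Real.log (15 * max z (k / 2) / k) ≤ 1 / 2 :=
    one_div_le_one_div_of_le (by norm_num) this
  linarith

lemma wt_mono {k : ℝ} (hk : 0 < k) {y z : ℝ} (h : y ≤ z) : wt k y ≤ wt k z := by
  have h2 := two_le_log hk (le_max_right y (k / 2))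
  have hpos : 0 < max y (k / 2) := lt_of_lt_of_le (by linarith) (le_max_right _ _)
  unfold wt
  gcongr

lemma rho_eq {k x : ℝ} (hk : 0 < k) (hx : k / 2 ≤ x) :
    rho (1 / 100) k x = 1 / 100 / Real.log (15 * x / k) ^ 2 := by
  unfold rho
  rw [if_neg]; linarith

lemma rho_bounds {k x : ℝ} (hk : 0 < k) (hx : k / 2 ≤ x) :
    0 < rho (1 / 100) k x ∧ rho (1 / 100) k x ≤ 1 / 400 := by
  rw [rho_eq hk hx]
  have := two_le_log hk hx
  refine ⟨by positivity, ?_⟩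
  rw [div_le_iff₀ (by positivity)]
  nlinarith

/-- Between `3x/2` and `2x` the weight grows by a factor exceeding `(1 + ρ(x)) / (1 - 2ρ(x))`. -/
lemma wt_gap {k x : ℝ} (hk : 0 < k) (hx : k / 2 ≤ x) {y n : ℝ} (hy : y ≤ 3 / 2 * x)
    (hn : 2 * x ≤ n) :
    (1 + rho (1 / 100) k x) * wt k y < (1 - 2 * rho (1 / 100) k x) * wt k n := by
  have hx0 : 0 < x := by linarith
  obtain ⟨hr0, hr1⟩ := rho_bounds hk hx
  have hw1 := wt_mono hk hy
  have hw2 := wt_mono hk hn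
  have hL := two_le_log hk hx
  have e1 : wt k (3 / 2 * x) = 1 - 1 / (Real.log (15 * x / k) + Real.log (3 / 2)) := by
    unfold wt
    rw [max_eq_left (by linarith), ← Real.log_mul (by positivity) (by norm_num)]
    congr 3; ring
  have e2 : wt k (2 * x) = 1 - 1 / (Real.log (15 * x / k) + Real.log 2) := by
    unfold wt
    rw [max_eq_left (by linarith), ← Real.log_mul (by positivity) (by norm_num)]
    congr 3; ring
  have hr := rho_eq hk hx
  set L := Real.log (15 * x / k)
  set r := rho (1 / 100) k x
  have ha0 : 0 ≤ Real.log (3 / 2) := Real.log_nonneg (by norm_num)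
  have ha1 : Real.log (3 / 2) ≤ 1 := by
    have := Real.log_le_sub_one_of_pos (show (0 : ℝ) < 3 / 2 by norm_num); linarith
  have hb1 : Real.log 2 ≤ 1 := by
    have := Real.log_le_sub_one_of_pos (show (0 : ℝ) < 2 by norm_num); linarith
  have hab : Real.log (3 / 2) + 1 / 4 ≤ Real.log 2 := by
    have h1 := Real.log_le_sub_one_of_pos (show (0 : ℝ) < 3 / 4 by norm_num)
    have h2 : Real.log (3 / 2) = Real.log 2 + Real.log (3 / 4) := by
      rw [← Real.log_mul (by norm_num) (by norm_num)]; norm_num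
    linarith
  set a := Real.log (3 / 2)
  set b := Real.log 2
  -- The right side is at least `(1 / 4) / (9 L² / 4) = 1 / (9 L²)`, so `ε₁ = 1 / 100` is small enough.
  have hgap : 3 * r < 1 / (L + a) - 1 / (L + b) := by
    have h1 : 1 / (L + a) - 1 / (L + b) = (b - a) / ((L + a) * (L + b)) := by
      have : L + a ≠ 0 := by positivity
      have : L + b ≠ 0 := by
        have : 0 < L + b := by linarith
        exact this.ne'
      field_simp; ring
    have h2 : 0 < (L + a) * (L + b) := mul_pos (by linarith) (by linarith)
    have h3 : (L + a) * (L + b) ≤ 9 / 4 * L ^ 2 := by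
      have : (L + a) * (L + b) ≤ (3 / 2 * L) * (3 / 2 * L) :=
        mul_le_mul (by linarith) (by linarith) (by linarith) (by linarith)
      nlinarith
    rw [h1, lt_div_iff₀ h2]
    have h4 : r * L ^ 2 = 1 / 100 := by rw [hr]; field_simp
    nlinarith [mul_le_mul_of_nonneg_left h3 hr0.le]
  have hw3 := wt_le_one hk n
  have hw4 := half_le_wt hk y
  have : wt k y ≤ 1 := wt_le_one hk y
  nlinarith

/-! ### Counting adjacent pairs -/

lemma two_mul_card_edges {W : Type*} [Fintype W] (K : SimpleGraph W) :
    2 * Nat.card K.edgeSet = (pairs K Finset.univ).card := by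
  classical
  rw [Nat.card_eq_fintype_card, ← SimpleGraph.edgeFinset_card, ← K.sum_degrees_eq_twice_card_edges]
  unfold pairs
  rw [Finset.univ_product_univ, Finset.card_filter, Fintype.sum_prod_type]
  refine Finset.sum_congr rfl fun u _ => ?_
  rw [← Finset.card_filter, ← SimpleGraph.card_neighborFinset_eq_degree]
  congr 1; ext v; simp

lemma avgDeg_eq {W : Type*} [Fintype W] (K : SimpleGraph W) :
    avgDeg K = (pairs K Finset.univ).card / (Fintype.card W : ℝ) := by
  unfold avgDeg
  rw [← two_mul_card_edges, Nat.card_eq_fintype_card (α := W)]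
  push_cast; rfl

lemma pairs_empty {V : Type*} (B : SimpleGraph V) : (pairs B ∅).card = 0 := by
  simp [pairs]

/-- Among all two-colourings, the bichromatic and the monochromatic adjacent pairs are equally
numerous (flip the colour of the first vertex), so some colouring cuts half of them. -/
lemma exists_bipartite_half {V : Type*} [Fintype V] (G : SimpleGraph V) :
    ∃ B : SimpleGraph V, B ≤ G ∧ B.Colorable 2 ∧
      (pairs G Finset.univ).card ≤ 2 * (pairs B Finset.univ).card := by
  classical
  let P := pairs G Finset.univ
  let bi (f : V → Bool) := (P.filter fun p => f p.1 ≠ f p.2).card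
  let mo (f : V → Bool) := (P.filter fun p => ¬ f p.1 ≠ f p.2).card
  have hsum : ∑ f, mo f ≤ ∑ f, bi f := by
    simp only [mo, bi, Finset.card_filter]
    rw [Finset.sum_comm, Finset.sum_comm (s := Finset.univ)]
    refine Finset.sum_le_sum fun p hp => ?_
    have hne : p.1 ≠ p.2 := by
      have : G.Adj p.1 p.2 := by simpa [P, pairs] using hp
      exact this.ne
    rw [← Finset.card_filter, ← Finset.card_filter]
    refine Finset.card_le_card_of_injOn (fun f => Function.update f p.1 (!f p.1)) ?_ ?_
    · intro f hf
      simp only [ne_eq, Decidable.not_not, Finset.coe_filter, Finset.mem_univ, true_and,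
        Set.mem_ofPred_eq] at hf ⊢
      rw [Function.update_self, Function.update_of_ne hne.symm, hf]
      simp
    · intro f _ g _ h
      funext v
      have hv := congrFun h v
      by_cases hvp : v = p.1
      · subst hvp; simpa using hv
      · simpa [Function.update_of_ne hvp] using hv
  obtain ⟨f, -, hf⟩ := Finset.exists_le_of_sum_le (Finset.univ_nonempty) hsum
  refine ⟨{ Adj := fun u v => G.Adj u v ∧ f u ≠ f v
            symm := ⟨fun u v h => ⟨h.1.symm, h.2.symm⟩⟩
            loopless := ⟨fun u h => h.2 rfl⟩ }, fun u v h => h.1, ?_, ?_⟩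
  · have c : SimpleGraph.Coloring
        ({ Adj := fun u v => G.Adj u v ∧ f u ≠ f v
           symm := ⟨fun u v h => ⟨h.1.symm, h.2.symm⟩⟩
           loopless := ⟨fun u h => h.2 rfl⟩ } : SimpleGraph V) Bool :=
      SimpleGraph.Coloring.mk f fun h => h.2
    simpa using c.colorable
  · have h1 : P.card = bi f + mo f := (Finset.card_filter_add_card_filter_not _).symm
    have h2 : bi f ≤ _ := Finset.card_le_card
      (t := pairs { Adj := fun u v => G.Adj u v ∧ f u ≠ f v
                    symm := ⟨fun u v h => ⟨h.1.symm, h.2.symm⟩⟩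
                    loopless := ⟨fun u h => h.2 rfl⟩ } Finset.univ) (by
        intro p hp
        simpa [P, pairs] using hp)
    change P.card ≤ _
    omega

lemma card_pairs_of_edges {V : Type*} [Fintype V] (F : Set (Sym2 V)) (P : Finset (V × V))
    (hP : ∀ p ∈ P, s(p.1, p.2) ∈ F) : P.card ≤ 2 * F.ncard := by
  classical
  have hmap : ∀ p ∈ P, s(p.1, p.2) ∈ F.toFinite.toFinset := by
    intro p hp; simpa using hP p hp
  have := Finset.card_le_mul_card_image_of_maps_to hmap 2 (by
    intro e _
    induction e with
    | _ a b =>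
      refine (Finset.card_le_card (t := {(a, b), (b, a)}) ?_).trans Finset.card_le_two
      intro p hp
      have h := (Finset.mem_filter.1 hp).2
      rw [Sym2.eq_iff] at h
      rcases h with h | h
      · simp [Prod.ext_iff, h.1, h.2]
      · simp [Prod.ext_iff, h.1, h.2])
  rwa [← Set.ncard_eq_toFinset_card F] at this

/-- Deleting `v` from `S` destroys at most two pairs for each neighbour of `v` in `S`. -/
lemma pairs_erase {V : Type*} [Fintype V] [DecidableEq V] (B : SimpleGraph V) (S : Finset V)
    (v : V) :
    (pairs B S).card ≤ (pairs B (S.erase v)).card + 2 * {u | u ∈ S ∧ B.Adj v u}.ncard := by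
  classical
  set D : Finset V := S.filter fun u => B.Adj v u
  have hD : {u | u ∈ S ∧ B.Adj v u} = (D : Set V) := by ext; simp [D]
  rw [hD, Set.ncard_coe_finset]
  have hsub : pairs B S ⊆ pairs B (S.erase v) ∪ (({v} ×ˢ D) ∪ (D ×ˢ {v})) := by
    rintro ⟨a, b⟩ hp
    simp only [pairs, D, Finset.mem_filter, Finset.mem_product, Finset.mem_union,
      Finset.mem_erase, Finset.mem_singleton] at hp ⊢
    obtain ⟨⟨ha, hb⟩, hab⟩ := hp
    by_cases h1 : a = v
    · subst h1; exact Or.inr (Or.inl ⟨rfl, hb, hab⟩)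
    · by_cases h2 : b = v
      · subst h2; exact Or.inr (Or.inr ⟨⟨ha, hab.symm⟩, rfl⟩)
      · exact Or.inl ⟨⟨⟨h1, ha⟩, h2, hb⟩, hab⟩
  have h1 := Finset.card_le_card hsub
  have h2 := Finset.card_union_le (pairs B (S.erase v)) (({v} ×ˢ D) ∪ (D ×ˢ {v}))
  have h3 := Finset.card_union_le ({v} ×ˢ D) (D ×ˢ {v})
  simp only [Finset.card_product, Finset.card_singleton] at h3
  omega

/-! ### The extremal vertex set -/

/-- A nonempty `S` maximising `e(B[S]) / (|S| w(|S|))`, together with the maximum `μ` (in pairs). -/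
lemma exists_max {V : Type*} [Fintype V] [Nonempty V] (B : SimpleGraph V) {k : ℝ} (hk : 0 < k) :
    ∃ (S : Finset V) (μ : ℝ), S.Nonempty ∧ ((pairs B S).card : ℝ) = μ * (S.card * wt k S.card) ∧
      ∀ T : Finset V, ((pairs B T).card : ℝ) ≤ μ * (T.card * wt k T.card) := by
  classical
  have hpos : ∀ T : Finset V, T.Nonempty → 0 < (T.card : ℝ) * wt k T.card := fun T hT =>
    mul_pos (by exact_mod_cast hT.card_pos) (by linarith [half_le_wt hk T.card])
  obtain ⟨S, hS, hmax⟩ := Finset.exists_max_image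
    ((Finset.univ : Finset (Finset V)).filter Finset.Nonempty)
    (fun T => ((pairs B T).card : ℝ) / (T.card * wt k T.card))
    ⟨Finset.univ, by simp [Finset.univ_nonempty]⟩
  have hS' : S.Nonempty := by simpa using hS
  refine ⟨S, _, hS', (div_mul_cancel₀ _ (hpos S hS').ne').symm, fun T => ?_⟩
  rcases T.eq_empty_or_nonempty with rfl | hT
  · simp [pairs_empty]
  · rw [← div_le_iff₀ (hpos T hT)]
    exact hmax T (by simpa using hT)

/-- The subgraph of `G` with vertex set `S` and the edges of `B` inside `S`. -/
def sub {V : Type*} {G B : SimpleGraph V} (hB : B ≤ G) (S : Finset V) : G.Subgraph where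
  verts := S
  Adj u v := u ∈ S ∧ v ∈ S ∧ B.Adj u v
  adj_sub h := hB h.2.2
  edge_vert h := h.1
  symm := ⟨fun _ _ h => ⟨h.2.1, h.1, h.2.2.symm⟩⟩

lemma avgDeg_sub {V : Type*} [Fintype V] {G B : SimpleGraph V} (hB : B ≤ G) (S : Finset V) :
    avgDeg (sub hB S).coe = (pairs B S).card / (S.card : ℝ) := by
  classical
  have : Fintype (sub hB S).verts := inferInstanceAs (Fintype (S : Set V))
  rw [avgDeg_eq]
  have h1 : Fintype.card (sub hB S).verts = S.card := by
    rw [← Nat.card_eq_fintype_card]; exact (Set.ncard_coe_finset S)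
  have h2 : (pairs (sub hB S).coe Finset.univ).card = (pairs B S).card := by
    refine Finset.card_bij (fun p _ => (p.1.1, p.2.1)) ?_ ?_ ?_
    · intro p hp
      have : (sub hB S).Adj p.1 p.2 := by simpa [pairs] using hp
      simp only [pairs, Finset.mem_filter, Finset.mem_product]
      exact ⟨⟨this.1, this.2.1⟩, this.2.2⟩
    · intro p _ q _ h
      simp only [Prod.mk.injEq] at h
      exact Prod.ext (Subtype.ext h.1) (Subtype.ext h.2)
    · rintro ⟨a, b⟩ hp
      simp only [pairs, Finset.mem_filter, Finset.mem_product] at hp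
      obtain ⟨⟨ha, hb⟩, hab⟩ := hp
      refine ⟨(⟨a, ha⟩, ⟨b, hb⟩), ?_, rfl⟩
      simp only [pairs, Finset.mem_filter, Finset.mem_product, Finset.mem_univ, true_and]
      exact ⟨ha, hb, hab⟩
  rw [h1, h2]

/-- Every edge of `B[S]` lies in `X` together with its remaining neighbours, avoids `X`, or is
deleted. -/
lemma pairs_split {V : Type*} [Fintype V] {G B : SimpleGraph V} (hB : B ≤ G) (S : Finset V)
    (X : Set (sub hB S).verts) (F : Set (Sym2 (sub hB S).verts)) :
    ∃ Y Z : Finset V,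
      Y.card ≤ X.ncard + (extNbhd ((sub hB S).coe.deleteEdges F) X).ncard ∧
      Z.card + X.ncard = S.card ∧
      (pairs B S).card ≤ (pairs B Y).card + (pairs B Z).card + 2 * F.ncard := by
  classical
  set N := extNbhd ((sub hB S).coe.deleteEdges F) X with hN
  set X' : Finset V := (Subtype.val '' X).toFinite.toFinset with hX'
  set N' : Finset V := (Subtype.val '' N).toFinite.toFinset with hN'
  have hXc : X'.card = X.ncard := by
    rw [hX', ← Set.ncard_eq_toFinset_card, Set.ncard_image_of_injective _ Subtype.val_injective]
  have hNc : N'.card = N.ncard := by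
    rw [hN', ← Set.ncard_eq_toFinset_card, Set.ncard_image_of_injective _ Subtype.val_injective]
  have hXS : X' ⊆ S := by
    intro a ha
    simp only [hX', Set.Finite.mem_toFinset, Set.mem_image] at ha
    obtain ⟨b, -, rfl⟩ := ha
    exact b.2
  have hmX : ∀ a (ha : a ∈ S), a ∈ X' ↔ (⟨a, ha⟩ : (sub hB S).verts) ∈ X := by
    intro a ha; simp only [hX', Set.Finite.mem_toFinset, Set.mem_image]
    constructor
    · rintro ⟨b, hb, rfl⟩; exact hb
    · intro h; exact ⟨_, h, rfl⟩
  have hmN : ∀ a (ha : a ∈ S), (⟨a, ha⟩ : (sub hB S).verts) ∈ N → a ∈ N' := by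
    intro a ha h; simp only [hN', Set.Finite.mem_toFinset, Set.mem_image]
    exact ⟨_, h, rfl⟩
  refine ⟨X' ∪ N', S \ X', ?_, ?_, ?_⟩
  · rw [← hXc, ← hNc]; exact Finset.card_union_le _ _
  · rw [← hXc]; exact Finset.card_sdiff_add_card_eq_card hXS
  · set F' : Set (Sym2 V) := Sym2.map Subtype.val '' F
    set P := (pairs B S).filter fun p => s(p.1, p.2) ∈ F'
    have hP : P.card ≤ 2 * F.ncard :=
      (card_pairs_of_edges F' P (fun p hp => (Finset.mem_filter.1 hp).2)).trans
        (Nat.mul_le_mul_left _ (Set.ncard_image_le F.toFinite))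
    have key : ∀ a b (ha : a ∈ S) (hb : b ∈ S), B.Adj a b → s(a, b) ∉ F' → a ∈ X' →
        b ∈ X' ∪ N' := by
      intro a b ha hb hab hF haX
      by_cases hbX : b ∈ X'
      · exact Finset.mem_union_left _ hbX
      · refine Finset.mem_union_right _ (hmN b hb ⟨?_, ⟨a, ha⟩, (hmX a ha).1 haX, ?_⟩)
        · rwa [← hmX b hb]
        · rw [SimpleGraph.deleteEdges_adj]
          exact ⟨⟨ha, hb, hab⟩, fun h => hF ⟨_, h, rfl⟩⟩
    have hsub : pairs B S ⊆ pairs B (X' ∪ N') ∪ pairs B (S \ X') ∪ P := by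
      rintro ⟨a, b⟩ hp
      have hp' := hp
      simp only [pairs, Finset.mem_filter, Finset.mem_product] at hp'
      obtain ⟨⟨ha, hb⟩, hab⟩ := hp'
      by_cases hF : s(a, b) ∈ F'
      · exact Finset.mem_union_right _ (Finset.mem_filter.2 ⟨hp, hF⟩)
      refine Finset.mem_union_left _ ?_
      by_cases haX : a ∈ X'
      · refine Finset.mem_union_left _ (Finset.mem_filter.2 ⟨Finset.mem_product.2 ⟨?_, ?_⟩, hab⟩)
        · exact Finset.mem_union_left _ haX
        · exact key a b ha hb hab hF haX
      by_cases hbX : b ∈ X'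
      · refine Finset.mem_union_left _ (Finset.mem_filter.2 ⟨Finset.mem_product.2 ⟨?_, ?_⟩, hab⟩)
        · exact key b a hb ha hab.symm (by rwa [Sym2.eq_swap]) hbX
        · exact Finset.mem_union_left _ hbX
      · exact Finset.mem_union_right _ (Finset.mem_filter.2 ⟨Finset.mem_product.2
          ⟨Finset.mem_sdiff.2 ⟨ha, haX⟩, Finset.mem_sdiff.2 ⟨hb, hbX⟩⟩, hab⟩)
    have h1 := Finset.card_le_card hsub
    have h2 := Finset.card_union_le (pairs B (X' ∪ N') ∪ pairs B (S \ X')) P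
    have h3 := Finset.card_union_le (pairs B (X' ∪ N')) (pairs B (S \ X'))
    omega

lemma sub_isRobustExpander {V : Type*} [Fintype V] {G B : SimpleGraph V} (hB : B ≤ G)
    (S : Finset V) {k μ : ℝ} (hk : 0 < k) (hμ : 0 < μ) (hS : S.Nonempty)
    (hSμ : ((pairs B S).card : ℝ) = μ * (S.card * wt k S.card))
    (hmax : ∀ T : Finset V, ((pairs B T).card : ℝ) ≤ μ * (T.card * wt k T.card)) :
    IsRobustExpander (sub hB S).coe (1 / 100) k := by
  intro X hX1 hX2 F _ hF
  by_contra! hcon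
  have hcard : Nat.card (sub hB S).verts = S.card := Set.ncard_coe_finset S
  rw [hcard] at hX2
  rw [avgDeg_sub] at hF
  obtain ⟨Y, Z, hY, hZ, hsplit⟩ := pairs_split hB S X F
  have hn : 0 < (S.card : ℝ) := by exact_mod_cast hS.card_pos
  have hY' : (Y.card : ℝ) ≤ X.ncard + (extNbhd ((sub hB S).coe.deleteEdges F) X).ncard := by
    exact_mod_cast hY
  have hZ' : (Z.card : ℝ) + X.ncard = S.card := by exact_mod_cast hZ
  have hsplit' : ((pairs B S).card : ℝ) ≤ (pairs B Y).card + (pairs B Z).card + 2 * F.ncard := by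
    exact_mod_cast hsplit
  have hmY := hmax Y
  have hmZ := hmax Z
  obtain ⟨hr0, hr1⟩ := rho_bounds hk hX1
  have hgap := wt_gap hk hX1 (y := Y.card) (n := S.card)
    (by nlinarith) (by linarith)
  have hwZ : wt k Z.card ≤ wt k S.card := wt_mono hk (by
    have : (0 : ℝ) ≤ X.ncard := Nat.cast_nonneg _
    linarith)
  have hwY := half_le_wt hk Y.card
  have havg : ((pairs B S).card : ℝ) / S.card = μ * wt k S.card := by
    rw [hSμ]; field_simp
  rw [havg] at hF
  set x : ℝ := (X.ncard : ℝ)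
  set r := rho (1 / 100) k x
  have hx : 0 < x := by linarith
  have hYle : (Y.card : ℝ) ≤ (1 + r) * x := by linarith
  have a1 : μ * (Y.card * wt k Y.card) ≤ μ * ((1 + r) * x * wt k Y.card) := by gcongr
  have a2 : μ * (Z.card * wt k Z.card) ≤ μ * ((S.card - x) * wt k S.card) := by
    have : (Z.card : ℝ) = S.card - x := by linarith
    rw [← this]; gcongr
  have a3 : μ * x * ((1 + r) * wt k Y.card) < μ * x * ((1 - 2 * r) * wt k S.card) := by gcongr
  nlinarith

/-- every graph of average degree at least 8d has a bipartite robust-expander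
subgraph with average degree at least 2d and minimum degree at least d. -/
theorem robust_expander_subgraph :
    ∃ ε₁ ε₂ : ℝ, 0 < ε₁ ∧ ε₁ < 1 ∧ 0 < ε₂ ∧ ε₂ < 1 ∧
      ∀ (V : Type) [Fintype V] (G : SimpleGraph V) (d : ℝ),
        8 * d ≤ avgDeg G →
          ∃ H : G.Subgraph, H.coe.Colorable 2 ∧
            IsRobustExpander H.coe ε₁ (ε₂ * d) ∧
            2 * d ≤ avgDeg H.coe ∧
            ∀ v : H.verts, d ≤ (Nat.card (H.coe.neighborSet v) : ℝ) := by
  refine ⟨1 / 100, 1 / 2, by norm_num, by norm_num, by norm_num, by norm_num, ?_⟩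
  intro V _ G d hd
  classical
  -- For `d ≤ 0` the subgraph without vertices has all the properties.
  rcases le_or_gt d 0 with hd0 | hd0
  · have : IsEmpty (⊥ : G.Subgraph).verts := ⟨fun v => v.2⟩
    refine ⟨⊥, SimpleGraph.Colorable.of_isEmpty _, ?_, ?_, fun v => v.2.elim⟩
    · intro X _ _ F _ _
      have : X = ∅ := Set.eq_empty_of_isEmpty X
      subst this
      simp
    · have : avgDeg (⊥ : G.Subgraph).coe = 0 := by
        unfold avgDeg
        rw [Nat.card_of_isEmpty (α := (⊥ : G.Subgraph).verts)]; simp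
      rw [this]; linarith
  obtain ⟨B, hB, hcol, hhalf⟩ := exists_bipartite_half G
  have hk : 0 < 1 / 2 * d := by linarith
  rw [avgDeg_eq] at hd
  -- An empty `V` would make the average degree `0 / 0 = 0`.
  have hV : 0 < (Fintype.card V : ℝ) := by
    rcases (Nat.cast_nonneg (α := ℝ) (Fintype.card V)).eq_or_lt with h | h
    · rw [← h, div_zero] at hd; linarith
    · exact h
  have : Nonempty V := Fintype.card_pos_iff.1 (by exact_mod_cast hV)
  rw [le_div_iff₀ hV] at hd
  obtain ⟨S, μ, hS, hSμ, hmax⟩ := exists_max B hk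
  have hn : 0 < (S.card : ℝ) := by exact_mod_cast hS.card_pos
  have hμd : 4 * d ≤ μ := by
    have h1 := hmax Finset.univ
    rw [Finset.card_univ] at h1
    have h2 := wt_le_one hk (Fintype.card V)
    have h3 := half_le_wt hk (Fintype.card V)
    have h4 : ((pairs G Finset.univ).card : ℝ) ≤ 2 * (pairs B Finset.univ).card := by
      exact_mod_cast hhalf
    set c := wt (1 / 2 * d) (Fintype.card V)
    have h5 : (Fintype.card V : ℝ) * (4 * d) ≤ Fintype.card V * (μ * c) := by nlinarith
    have h6 : 4 * d ≤ μ * c := le_of_mul_le_mul_left h5 hV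
    nlinarith
  have hμ : 0 < μ := by linarith
  have havg : avgDeg (sub hB S).coe = μ * wt (1 / 2 * d) S.card := by
    rw [avgDeg_sub, hSμ]; field_simp
  have hw := half_le_wt hk S.card
  have hdeg : 2 * d ≤ μ * wt (1 / 2 * d) S.card := by nlinarith
  refine ⟨sub hB S, ?_, sub_isRobustExpander hB S hk hμ hS hSμ hmax, by rwa [havg], ?_⟩
  · obtain ⟨c⟩ := hcol
    exact ⟨SimpleGraph.Coloring.mk (fun v => c v.1) fun h => c.valid h.2.2⟩
  · intro v
    have hvS : v.1 ∈ S := v.2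
    have hcard : Nat.card ((sub hB S).coe.neighborSet v) = {u | u ∈ S ∧ B.Adj v.1 u}.ncard := by
      change Set.ncard _ = _
      rw [← Set.ncard_image_of_injective _ Subtype.val_injective]
      congr 1
      ext u
      constructor
      · rintro ⟨w, hw, rfl⟩; exact ⟨hw.2.1, hw.2.2⟩
      · rintro ⟨hu, hvu⟩; exact ⟨⟨u, hu⟩, ⟨hvS, hu, hvu⟩, rfl⟩
    rw [hcard]
    have h1 : ((pairs B S).card : ℝ) ≤ (pairs B (S.erase v.1)).card +
        2 * ({u | u ∈ S ∧ B.Adj v.1 u}.ncard : ℝ) := by exact_mod_cast pairs_erase B S v.1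
    have h2 := hmax (S.erase v.1)
    have h3 : ((S.erase v.1).card : ℝ) + 1 = S.card := by
      exact_mod_cast Finset.card_erase_add_one hvS
    have h4 : wt (1 / 2 * d) (S.erase v.1).card ≤ wt (1 / 2 * d) S.card :=
      wt_mono hk (by linarith)
    have h5 : μ * ((S.erase v.1).card * wt (1 / 2 * d) (S.erase v.1).card) ≤
        μ * ((S.erase v.1).card * wt (1 / 2 * d) S.card) := by gcongr
    have h6 : ((S.erase v.1).card : ℝ) = S.card - 1 := by linarith
    rw [h6] at h5 h2
    nlinarith
end

section
/- For any constant 0 ≤ η ≤ 1/4, every d-regular graph G on n vertices with 2/η ≤ d ≤ η·√n contains d pairwise vertex-disjoint copies of the star K_{1, ⌈(1−η/2)d⌉}. -/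
/-!
The stars are chosen greedily. Put `s = ⌈(1 - η/2) d⌉`; since `η d ≥ 2` a star `K_{1,s}` has
`s + 1 ≤ d` vertices, so fewer than `d` stars cover a set `S` of fewer than `d²` vertices.
If no vertex outside `S` had `s` neighbours outside `S`, each of them would send at least
`d + 1 - s ≥ η d / 2` edges into `S`, whereas `S` receives at most `d |S|` edges
(`exists_star_outside`). This forces `(n - |S|) η / 2 ≤ |S|`, which is impossible because
`|S| < d² ≤ η² n` and `η ≤ 1/4`. Hence a further star disjoint from `S` always exists, and
`exists_disjoint_stars` iterates this step.
-/

open SimpleGraph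

/-- Double counting of the edges between `S` and its complement: if `S` is small enough, some
vertex outside `S` keeps at least `s` neighbours outside `S`. -/
theorem exists_star_outside {V : Type*} [Fintype V] [DecidableEq V] (G : SimpleGraph V)
    [DecidableRel G.Adj] {d s : ℕ} (hreg : G.IsRegularOfDegree d) (S : Finset V)
    (hS : S.card * d < Sᶜ.card * (d + 1 - s)) :
    ∃ v ∉ S, s ≤ (G.neighborFinset v \ S).card := by
  by_contra! hcon
  refine absurd (Finset.card_mul_le_card_mul G.Adj (s := Sᶜ) (t := S) (m := d + 1 - s) (n := d)
    ?_ ?_) (not_le.mpr hS)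
  · intro v hv
    have h1 := hcon v (by simpa using hv)
    have h2 : (G.neighborFinset v).card = d := hreg v
    have h3 := Finset.card_sdiff_add_card_inter (G.neighborFinset v) S
    have h4 : S.bipartiteAbove G.Adj v = G.neighborFinset v ∩ S := by
      ext w
      simp [Finset.mem_bipartiteAbove, and_comm]
    rw [h4]
    omega
  · intro w _
    have h2 : (G.neighborFinset w).card = d := hreg w
    rw [← h2]
    refine Finset.card_le_card fun v hv => ?_
    simpa using ((Finset.mem_bipartiteBelow _).1 hv).2.symm

/-- The greedy step, iterated: if outside every set of at most `(m - 1) * (s + 1)` vertices there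
is a copy of `K_{1,s}`, then there are `k` disjoint copies for every `k ≤ m`. -/
theorem exists_disjoint_stars {V : Type*} [Fintype V] [DecidableEq V] (G : SimpleGraph V)
    [DecidableRel G.Adj] {m s : ℕ}
    (h : ∀ S : Finset V, S.card + (s + 1) ≤ m * (s + 1) →
      ∃ v ∉ S, s ≤ (G.neighborFinset v \ S).card) (k : ℕ) (hk : k ≤ m) :
    ∃ (c : Fin k → V) (L : Fin k → Finset V),
      (∀ i, c i ∉ L i) ∧
      (∀ i, (L i).card = s) ∧
      (∀ i, ∀ u ∈ L i, G.Adj (c i) u) ∧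
      (∀ i j, i ≠ j →
        Disjoint (insert (c i) (↑(L i) : Set V)) (insert (c j) ↑(L j))) := by
  induction k with
  | zero => exact ⟨Fin.elim0, Fin.elim0, fun i => i.elim0, fun i => i.elim0, fun i => i.elim0,
      fun i => i.elim0⟩
  | succ k ih =>
    obtain ⟨c, L, hcL, hcard, hadj, hdisj⟩ := ih (by omega)
    set S : Finset V := Finset.univ.biUnion fun i => insert (c i) (L i) with hSdef
    have hScard : S.card ≤ k * (s + 1) := by
      refine (Finset.card_biUnion_le_card_mul _ _ (s + 1) fun i _ => ?_).trans_eq (by simp)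
      exact (Finset.card_insert_le _ _).trans_eq (by rw [hcard i])
    have hle : S.card + (s + 1) ≤ m * (s + 1) := by
      have := Nat.mul_le_mul_right (s + 1) hk
      rw [Nat.succ_mul] at this
      omega
    obtain ⟨v, hvS, hv⟩ := h S hle
    obtain ⟨T, hTsub, hTcard⟩ := Finset.exists_subset_card_eq hv
    have hTadj : ∀ u ∈ T, G.Adj v u := fun u hu => by
      simpa using (Finset.mem_sdiff.mp (hTsub hu)).1
    have hTS : ∀ u ∈ T, u ∉ S := fun u hu => (Finset.mem_sdiff.mp (hTsub hu)).2
    have hnew : ∀ i, Disjoint (insert v (↑T : Set V)) (insert (c i) ↑(L i)) := by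
      intro i
      rw [Set.disjoint_left]
      intro x hx hxi
      have hxS : x ∈ S := Finset.mem_biUnion.mpr ⟨i, Finset.mem_univ _, by simpa using hxi⟩
      rcases hx with rfl | hx
      · exact hvS hxS
      · exact hTS x hx hxS
    refine ⟨Fin.cons v c, Fin.cons T L, ?_, ?_, ?_, ?_⟩
    · exact Fin.cases (fun hvT => G.irrefl (hTadj v hvT)) hcL
    · exact Fin.cases hTcard hcard
    · exact Fin.cases hTadj hadj
    · intro i j
      cases i using Fin.cases with
      | zero =>
        cases j using Fin.cases with
        | zero => exact fun hij => absurd rfl hij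
        | succ j => exact fun _ => hnew j
      | succ i =>
        cases j using Fin.cases with
        | zero => exact fun _ => (hnew i).symm
        | succ j => exact fun hij => hdisj i j fun e => hij (by rw [e])

/-- disjoint stars in regular graphs. -/
theorem disjoint_stars_in_regular_graph (η : ℝ) (hη0 : 0 ≤ η) (hη1 : η ≤ 1 / 4)
    (V : Type) [Fintype V] [DecidableEq V] (G : SimpleGraph V) [DecidableRel G.Adj]
    (d : ℕ) (hreg : G.IsRegularOfDegree d)
    (hd1 : 2 / η ≤ (d : ℝ)) (hd2 : (d : ℝ) ≤ η * Real.sqrt (Fintype.card V)) :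
    ∃ (c : Fin d → V) (L : Fin d → Finset V),
      (∀ i, c i ∉ L i) ∧
      (∀ i, (L i).card = ⌈(1 - η / 2) * (d : ℝ)⌉₊) ∧
      (∀ i, ∀ u ∈ L i, G.Adj (c i) u) ∧
      (∀ i j, i ≠ j →
        Disjoint (insert (c i) (↑(L i) : Set V)) (insert (c j) ↑(L j))) := by
  rcases hη0.eq_or_lt with rfl | hη
  · -- For `η = 0` the upper bound forces `d = 0`.
    have hd : d = 0 := by
      have : (d : ℝ) ≤ 0 := by simpa using hd2
      exact_mod_cast this.antisymm (Nat.cast_nonneg d)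
    subst hd
    exact ⟨Fin.elim0, Fin.elim0, fun i => i.elim0, fun i => i.elim0, fun i => i.elim0,
      fun i => i.elim0⟩
  have hηd : 2 ≤ η * d := by
    rw [div_le_iff₀ hη] at hd1
    linarith
  have hdpos : (0 : ℝ) < d := by
    by_contra! hneg
    nlinarith
  have hn : (d : ℝ) ^ 2 ≤ η ^ 2 * Fintype.card V := by
    have := pow_le_pow_left₀ hdpos.le hd2 2
    rwa [mul_pow, Real.sq_sqrt (Nat.cast_nonneg _)] at this
  set s := ⌈(1 - η / 2) * (d : ℝ)⌉₊ with hs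
  have hsd : s + 1 ≤ d := by
    have h1 : s ≤ d - 1 := by
      refine Nat.ceil_le.mpr ?_
      have h2 : 1 ≤ d := by exact_mod_cast hdpos
      push_cast [Nat.cast_sub h2]
      linarith
    have h2 : 0 < d := by exact_mod_cast hdpos
    omega
  have hslt : (s : ℝ) < (1 - η / 2) * d + 1 :=
    Nat.ceil_lt_add_one (mul_nonneg (by linarith) hdpos.le)
  refine exists_disjoint_stars G (fun S hS => exists_star_outside G hreg S ?_) d le_rfl
  have hSd : (S.card : ℝ) ≤ (d : ℝ) ^ 2 := by
    have : S.card ≤ d * d := by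
      have := Nat.mul_le_mul_left d hsd
      omega
    rw [sq]
    exact_mod_cast this
  have hcompl : (Sᶜ.card : ℝ) = Fintype.card V - S.card := by
    rw [Finset.card_compl, Nat.cast_sub (Finset.card_le_univ S)]
  have hback : η / 2 * d ≤ ((d + 1 - s : ℕ) : ℝ) := by
    rw [Nat.cast_sub (by omega)]
    push_cast
    linarith
  have hd2pos : (0 : ℝ) < (d : ℝ) ^ 2 := by positivity
  have hηn : 4 * (d : ℝ) ^ 2 ≤ η * Fintype.card V := by
    -- `d² ≤ η · (η n) ≤ (η n) / 4`.
    have : (0 : ℝ) ≤ η * Fintype.card V := by positivity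
    nlinarith
  have hmain : (S.card : ℝ) < Sᶜ.card * (η / 2) := by
    rw [hcompl]
    have : η * (S.card : ℝ) ≤ 1 / 4 * (d : ℝ) ^ 2 := by gcongr
    linarith
  have hfin : (S.card : ℝ) * d < Sᶜ.card * ((d + 1 - s : ℕ) : ℝ) :=
    calc (S.card : ℝ) * d < Sᶜ.card * (η / 2) * d := by gcongr
      _ = Sᶜ.card * (η / 2 * d) := by ring
      _ ≤ _ := by gcongr
  exact_mod_cast hfin
end

section
/- For each 0 < ε₁, ε₂ < 1 there exists K > 0 such that the following holds for all n and d with log^{200} n ≤ d ≤ n/K. Let x, y be positive integers with x < 100 and y = ⌊(x−7)/2⌋, and set m = (2/ε₁)·log³(15n/(ε₂d)). If G is an n-vertex (dm^x, d²m^x, d/2)-dense graph with minimum degree δ(G) = d, then for any vertex set U ⊆ V(G) with |U| ≤ dm^{y+1} and any edge set W ⊆ E(G) with |W| ≤ d²m^y, the graph G₁ obtained from G by deleting the edges in W and the vertices in U contains a collection of pairwise vertex-disjoint stars consisting of m^{y+3} stars each with ⌈d/4⌉ leaves together with dm^{y+5} stars each with ⌈m^{y+1}⌉ leaves. -/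
/-!
The stars are found greedily. If the vertices of `U` and of the stars chosen so far form a set `B`
with `|B| ≤ d m ^ x`, then density gives `(G - W) - B` average degree at least `d / 2`, so it has a
vertex with at least `d / 2` neighbours outside `B` (`exists_star_of_dense`), and both requested
numbers of leaves are at most `d / 2`. Hence the next star can always be chosen
(`greedy_stars`) as long as the total size stays within `d m ^ x`.

With `m` large, the total size is at most
`d m ^ (y + 1) + 2 d m ^ (y + 3) + 6 d m ^ (2 y + 6) ≤ d m ^ (2 y + 7) ≤ d m ^ x`
(`star_budget`). The bound `⌈m ^ (y + 1)⌉ ≤ d / 2` is where `log n ^ 200 ≤ d` enters: for large `n`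
one has `m ≤ log n ^ 4`, and `y + 1 ≤ 47`, so `m ^ (y + 1) ≤ log n ^ 188` (`param_bounds`).
-/

open SimpleGraph

/-! ### Greedy choice of disjoint stars -/

/-- A nonempty finite graph has a vertex whose degree is at least the average degree. Nonemptiness
follows from `0 < γ`, because the average degree of the empty graph is `0`. -/
lemma exists_degree_ge_of_le_avgDeg {T : Type*} [Fintype T] (H : SimpleGraph T) {γ : ℝ}
    (hγ : 0 < γ) (h : γ ≤ avgDeg H) :
    ∃ v : T, ∃ L : Finset T, γ ≤ (L.card : ℝ) ∧ ∀ u ∈ L, H.Adj v u := by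
  classical
  by_contra! hcon
  have hdeg : ∀ v : T, (H.degree v : ℝ) < γ := by
    intro v
    by_contra! hv
    obtain ⟨u, hu, hu'⟩ := hcon v (H.neighborFinset v) (by simpa using hv)
    exact hu' (by simpa using hu)
  have hsum : (∑ v, (H.degree v : ℝ)) = 2 * (Nat.card H.edgeSet : ℝ) := by
    have := H.sum_degrees_eq_twice_card_edges
    rw [Nat.card_eq_fintype_card, ← SimpleGraph.edgeFinset_card]
    exact_mod_cast this
  unfold avgDeg at h
  rw [← hsum, Nat.card_eq_fintype_card] at h
  rcases isEmpty_or_nonempty T with hT | hT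
  · simp at h
    linarith
  · have hlt : (∑ v, (H.degree v : ℝ)) < ∑ _v : T, γ :=
      Finset.sum_lt_sum_of_nonempty Finset.univ_nonempty fun v _ => hdeg v
    have hpos : (0 : ℝ) < Fintype.card T := by exact_mod_cast Fintype.card_pos
    rw [le_div_iff₀ hpos] at h
    simp at hlt
    linarith

/-- In a dense graph, a star with `s ≤ γ` leaves survives the deletion of few vertices and edges. -/
lemma exists_star_of_dense {V : Type*} [Fintype V] {G : SimpleGraph V} {N t γ : ℝ} (hγ : 0 < γ)
    (hG : GraphDense G N t γ) {W : Set (Sym2 V)} (hW : W ⊆ G.edgeSet) (hWt : (W.ncard : ℝ) ≤ t)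
    (B : Finset V) (hB : (B.card : ℝ) ≤ N) (s : ℕ) (hs : (s : ℝ) ≤ γ) :
    ∃ v : V, ∃ L : Finset V, v ∉ B ∧ L.card = s ∧ Disjoint L B ∧
      ∀ u ∈ L, (G.deleteEdges W).Adj v u := by
  classical
  have h := hG (B : Set V) (by simpa using hB) W hW hWt
  obtain ⟨v, L, hL, hadj⟩ := exists_degree_ge_of_le_avgDeg _ hγ h
  obtain ⟨L', hL'L, hL'⟩ := Finset.exists_subset_card_eq
    (show s ≤ L.card by exact_mod_cast hs.trans hL)
  refine ⟨v, L'.map (Function.Embedding.subtype _), fun hv => v.2 (by simpa using hv), by simpa using hL', ?_, ?_⟩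
  · rw [Finset.disjoint_left]
    intro a ha
    obtain ⟨b, -, rfl⟩ := Finset.mem_map.1 ha
    exact fun hb => b.2 (by simpa using hb)
  · intro u hu
    obtain ⟨b, hb, rfl⟩ := Finset.mem_map.1 hu
    exact hadj b (hL'L hb)

/-- Greedy selection: if every set `B` with `|B| ≤ N` can be avoided by a star of any size `s i`,
then stars of all the sizes `s i`, `i ∈ S`, can be chosen pairwise disjoint and avoiding `B₀`,
provided that `B₀` and all the stars together have at most `N` vertices. -/
lemma greedy_stars {V ι : Type*} [DecidableEq V] [DecidableEq ι] {H : SimpleGraph V} {N : ℝ}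
    (s : ι → ℕ)
    (hstar : ∀ B : Finset V, (B.card : ℝ) ≤ N → ∀ i, ∃ v : V, ∃ L : Finset V,
      v ∉ B ∧ L.card = s i ∧ Disjoint L B ∧ ∀ u ∈ L, H.Adj v u)
    (B₀ : Finset V) (S : Finset ι) (hN : (B₀.card : ℝ) + ∑ i ∈ S, ((s i : ℝ) + 1) ≤ N) :
    ∃ (c : ι → V) (L : ι → Finset V),
      (∀ i ∈ S, (L i).card = s i ∧ (∀ u ∈ L i, H.Adj (c i) u) ∧
        Disjoint (insert (c i) (L i)) B₀) ∧
      ∀ i ∈ S, ∀ j ∈ S, i ≠ j → Disjoint (insert (c i) (L i)) (insert (c j) (L j)) := by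
  induction S using Finset.induction_on with
  | empty =>
    by_cases hι : Nonempty ι
    · -- Only a vertex for the irrelevant value of `c` is needed here.
      obtain ⟨v, -⟩ := hstar B₀ (by simpa using hN) hι.some
      exact ⟨fun _ => v, fun _ => ∅, by simp, by simp⟩
    · rw [not_nonempty_iff] at hι
      exact ⟨fun i => hι.elim i, fun _ => ∅, by simp, by simp⟩
  | insert a S ha ih =>
    rw [Finset.sum_insert ha] at hN
    obtain ⟨c, L, h1, h2⟩ := ih (by
      have : (0 : ℝ) ≤ s a := Nat.cast_nonneg _
      linarith)
    have hcard : ((B₀ ∪ S.biUnion fun i => insert (c i) (L i)).card : ℝ) ≤ N := by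
      have e1 : (B₀ ∪ S.biUnion fun i => insert (c i) (L i)).card ≤
          B₀.card + ∑ i ∈ S, (s i + 1) := by
        refine (Finset.card_union_le _ _).trans (Nat.add_le_add_left ?_ _)
        refine Finset.card_biUnion_le.trans (Finset.sum_le_sum fun i hi => ?_)
        refine (Finset.card_insert_le _ _).trans ?_
        rw [(h1 i hi).1]
      have e2 : ((B₀ ∪ S.biUnion fun i => insert (c i) (L i)).card : ℝ) ≤
          B₀.card + ∑ i ∈ S, ((s i : ℝ) + 1) := by exact_mod_cast e1
      have : (0 : ℝ) ≤ s a := Nat.cast_nonneg _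
      linarith
    obtain ⟨v, M, hv, hM, hdisj, hadj⟩ := hstar _ hcard a
    have hnew : Disjoint (insert v M) (B₀ ∪ S.biUnion fun i => insert (c i) (L i)) :=
      Finset.disjoint_insert_left.2 ⟨hv, hdisj⟩
    rw [Finset.disjoint_union_right, Finset.disjoint_biUnion_right] at hnew
    have hne : ∀ i ∈ S, i ≠ a := fun i hi h => ha (h ▸ hi)
    refine ⟨Function.update c a v, Function.update L a M, ?_, ?_⟩
    · intro i hi
      rcases Finset.mem_insert.1 hi with rfl | hi
      · simpa using ⟨hM, hadj, by simpa using hnew.1⟩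
      · simpa [hne i hi] using h1 i hi
    · intro i hi j hj hij
      rcases Finset.mem_insert.1 hi with rfl | hi' <;> rcases Finset.mem_insert.1 hj with rfl | hj'
      · exact absurd rfl hij
      · rw [Function.update_self, Function.update_self, Function.update_of_ne (hne j hj'),
          Function.update_of_ne (hne j hj')]
        exact hnew.2 j hj'
      · rw [Function.update_self, Function.update_self, Function.update_of_ne (hne i hi'),
          Function.update_of_ne (hne i hi')]
        exact (hnew.2 i hi').symm
      · rw [Function.update_of_ne (hne j hj'), Function.update_of_ne (hne j hj'),
          Function.update_of_ne (hne i hi'), Function.update_of_ne (hne i hi')]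
        exact h2 i hi' j hj' hij

/-! ### Numerical estimates -/

/-- For `n / d` at least a suitable constant, `m` is large, while `m ^ 47` is small compared to
`d`. -/
lemma param_bounds {ε₁ ε₂ : ℝ} (hε₁0 : 0 < ε₁) (hε₁1 : ε₁ < 1) (hε₂0 : 0 < ε₂) (hε₂1 : ε₂ < 1)
    {n : ℕ} {d : ℝ} (hd1 : 1 ≤ d) (hlog : Real.log n ^ 200 ≤ d)
    (hdn : d ≤ (n : ℝ) / (Real.exp (16 / ε₁) * (15 / ε₂))) :
    16 ≤ mParam ε₁ ε₂ n d ∧ mParam ε₁ ε₂ n d ^ 47 ≤ d / 4 ∧ 4 ≤ d := by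
  have hA : 16 ≤ 16 / ε₁ := by rw [le_div_iff₀ hε₁0]; linarith
  have hB : 15 ≤ 15 / ε₂ := by rw [le_div_iff₀ hε₂0]; linarith
  have hexp : 1 ≤ Real.exp (16 / ε₁) := Real.one_le_exp (by linarith)
  have hKpos : 0 < Real.exp (16 / ε₁) * (15 / ε₂) := by positivity
  rw [le_div_iff₀ hKpos] at hdn
  have hKn : Real.exp (16 / ε₁) * (15 / ε₂) ≤ n := by nlinarith
  have hn1 : Real.exp (16 / ε₁) ≤ n := by nlinarith
  have hn2 : 15 / ε₂ ≤ n := by nlinarith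
  have hn0 : (0 : ℝ) < n := by linarith
  have hln : 16 / ε₁ ≤ Real.log n := (Real.le_log_iff_exp_le hn0).2 hn1
  have hrw : 15 * (n : ℝ) / (ε₂ * d) = 15 / ε₂ * (n / d) := by field_simp
  have hd0 : 0 < d := by linarith
  have hnd : Real.exp (16 / ε₁) ≤ n / d := by
    rw [le_div_iff₀ hd0]
    nlinarith [mul_le_mul_of_nonneg_left hB (mul_pos hd0 (Real.exp_pos (16 / ε₁))).le]
  have hlow : 16 / ε₁ ≤ Real.log (15 * n / (ε₂ * d)) := by
    rw [hrw, Real.le_log_iff_exp_le (by positivity)]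
    nlinarith
  have hup : Real.log (15 * n / (ε₂ * d)) ≤ 2 * Real.log n := by
    have h2 : 2 * Real.log n = Real.log ((n : ℝ) ^ 2) := by rw [Real.log_pow]; norm_num
    rw [h2, hrw]
    apply Real.log_le_log (by positivity)
    have : (n : ℝ) / d ≤ n := div_le_self hn0.le hd1
    rw [sq]
    exact mul_le_mul hn2 this (by positivity) hn0.le
  set l := Real.log (15 * n / (ε₂ * d)) with hl
  set g := Real.log (n : ℝ) with hg
  have hm : mParam ε₁ ε₂ n d = 2 / ε₁ * l ^ 3 := rfl
  have hl16 : 16 ≤ l := hA.trans hlow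
  have hg16 : 16 ≤ g := hA.trans hln
  have h2ε : 2 ≤ 2 / ε₁ := by rw [le_div_iff₀ hε₁0]; linarith
  have hmlow : 16 ≤ mParam ε₁ ε₂ n d := by
    rw [hm]
    have : (16 : ℝ) ^ 3 ≤ l ^ 3 := by gcongr
    nlinarith
  have hmup : mParam ε₁ ε₂ n d ≤ g ^ 4 := by
    rw [hm]
    calc 2 / ε₁ * l ^ 3 ≤ 2 / ε₁ * (2 * g) ^ 3 := by gcongr
      _ = 16 / ε₁ * g ^ 3 := by ring
      _ ≤ g * g ^ 3 := by gcongr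
      _ = g ^ 4 := by ring
  have hg12 : (4 : ℝ) ≤ g ^ 12 := by
    calc (4 : ℝ) ≤ 16 ^ 12 := by norm_num
      _ ≤ g ^ 12 := by gcongr
  have hg188 : (1 : ℝ) ≤ g ^ 188 := one_le_pow₀ (by linarith)
  have hgd : 4 * g ^ 188 ≤ d := by
    calc 4 * g ^ 188 ≤ g ^ 12 * g ^ 188 := by gcongr
      _ = g ^ 200 := by rw [← pow_add]
      _ ≤ d := hlog
  refine ⟨hmlow, ?_, by linarith⟩
  have : mParam ε₁ ε₂ n d ^ 47 ≤ (g ^ 4) ^ 47 := by gcongr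
  rw [← pow_mul] at this
  norm_num at this
  linarith

/-- The deleted vertices and all the stars together fit into the density budget. -/
lemma star_budget {d m : ℝ} {x y : ℕ} (hd : 4 ≤ d) (hm : 16 ≤ m) (hxy : 2 * y + 7 ≤ x) :
    d * m ^ (y + 1) + (⌈m ^ (y + 3)⌉₊ * ((⌈d / 4⌉₊ : ℝ) + 1) +
      ⌈d * m ^ (y + 5)⌉₊ * ((⌈m ^ (y + 1)⌉₊ : ℝ) + 1)) ≤ d * m ^ x := by
  have hm1 : 1 ≤ m := by linarith
  have p1 : 1 ≤ m ^ (y + 1) := one_le_pow₀ hm1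
  have p3 : 1 ≤ m ^ (y + 3) := one_le_pow₀ hm1
  have p5 : 1 ≤ m ^ (y + 5) := one_le_pow₀ hm1
  have c1 : (⌈m ^ (y + 1)⌉₊ : ℝ) < m ^ (y + 1) + 1 := Nat.ceil_lt_add_one (by linarith)
  have c3 : (⌈m ^ (y + 3)⌉₊ : ℝ) < m ^ (y + 3) + 1 := Nat.ceil_lt_add_one (by linarith)
  have c5 : (⌈d * m ^ (y + 5)⌉₊ : ℝ) < d * m ^ (y + 5) + 1 :=
    Nat.ceil_lt_add_one (by positivity)
  have c4 : (⌈d / 4⌉₊ : ℝ) < d / 4 + 1 := Nat.ceil_lt_add_one (by linarith)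
  have dp5 : 1 ≤ d * m ^ (y + 5) := by nlinarith
  have a1 : (⌈m ^ (y + 3)⌉₊ : ℝ) * ((⌈d / 4⌉₊ : ℝ) + 1) ≤ (2 * m ^ (y + 3)) * d := by
    apply mul_le_mul <;> first | positivity | linarith
  have a2 : (⌈d * m ^ (y + 5)⌉₊ : ℝ) * ((⌈m ^ (y + 1)⌉₊ : ℝ) + 1) ≤
      (2 * (d * m ^ (y + 5))) * (3 * m ^ (y + 1)) := by
    apply mul_le_mul <;> first | positivity | linarith
  have q1 : m ^ (y + 1) ≤ m ^ (2 * y + 6) := pow_le_pow_right₀ hm1 (by omega)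
  have q3 : m ^ (y + 3) ≤ m ^ (2 * y + 6) := pow_le_pow_right₀ hm1 (by omega)
  have q6 : m ^ (y + 5) * m ^ (y + 1) = m ^ (2 * y + 6) := by rw [← pow_add]; congr 1; omega
  have p6 : 0 < m ^ (2 * y + 6) := by positivity
  have q7 : 9 * m ^ (2 * y + 6) ≤ m ^ x := by
    calc 9 * m ^ (2 * y + 6) ≤ m * m ^ (2 * y + 6) := by gcongr; linarith
      _ = m ^ (2 * y + 7) := by ring
      _ ≤ m ^ x := pow_le_pow_right₀ hm1 hxy
  calc _ ≤ d * m ^ (y + 1) + (2 * m ^ (y + 3) * d +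
          2 * (d * m ^ (y + 5)) * (3 * m ^ (y + 1))) := by linarith
    _ = d * (m ^ (y + 1) + 2 * m ^ (y + 3) + 6 * (m ^ (y + 5) * m ^ (y + 1))) := by ring
    _ ≤ d * m ^ x := by
      rw [q6]
      gcongr
      linarith

/-! ### Stars in the remaining graph -/

/-- a collection of disjoint stars in the graph obtained by deleting W and U. -/
theorem find_star_collection (ε₁ ε₂ : ℝ)
    (hε₁0 : 0 < ε₁) (hε₁1 : ε₁ < 1) (hε₂0 : 0 < ε₂) (hε₂1 : ε₂ < 1) :
    ∃ K : ℝ, 0 < K ∧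
      ∀ (n : ℕ) (d : ℝ), Real.log n ^ 200 ≤ d → d ≤ (n : ℝ) / K →
        ∀ x y : ℕ, 0 < x → x < 100 → 0 < y → y = (x - 7) / 2 →
          ∀ m : ℝ, m = mParam ε₁ ε₂ n d →
            ∀ (V : Type) [Fintype V] (G : SimpleGraph V),
              Fintype.card V = n →
              GraphDense G (d * m ^ x) (d ^ 2 * m ^ x) (d / 2) →
              (minDeg G : ℝ) = d →
              ∀ U : Set V, (U.ncard : ℝ) ≤ d * m ^ (y + 1) →
                ∀ W : Set (Sym2 V), W ⊆ G.edgeSet → (W.ncard : ℝ) ≤ d ^ 2 * m ^ y →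
                  ∃ k₁ k₂ : ℕ, m ^ (y + 3) ≤ (k₁ : ℝ) ∧ d * m ^ (y + 5) ≤ (k₂ : ℝ) ∧
                    HasTwoStarCollections ((G.deleteEdges W).induce Uᶜ)
                      k₁ ⌈d / 4⌉₊ k₂ ⌈m ^ (y + 1)⌉₊ := by
  refine ⟨Real.exp (16 / ε₁) * (15 / ε₂), by positivity, ?_⟩
  intro n d hlog hdn x y hx hx100 hy hxy m hm V _ G hV hG hmin U hU W hW hWc
  rcases Nat.eq_zero_or_pos (minDeg G) with h0 | h0
  · -- If `d = 0`, then `m = 0` by the conventions for `/` and `log`, and no stars are needed.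
    have hd : d = 0 := by rw [← hmin, h0]; simp
    have hm0 : m = 0 := by simp [hm, mParam, hd]
    exact ⟨0, 0, by simp [hm0], by simp [hd],
      Sum.elim Fin.elim0 Fin.elim0, Sum.elim Fin.elim0 Fin.elim0,
      by simp, by simp, by simp, by simp, by simp⟩
  have hd1 : 1 ≤ d := by rw [← hmin]; exact_mod_cast h0
  obtain ⟨hm16, hm47, hd4⟩ := param_bounds hε₁0 hε₁1 hε₂0 hε₂1 hd1 hlog hdn
  rw [← hm] at hm16 hm47
  have hm1 : 1 ≤ m := by linarith
  have hWx : (W.ncard : ℝ) ≤ d ^ 2 * m ^ x := by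
    refine hWc.trans ?_
    gcongr
    · omega
  have hs1 : (⌈d / 4⌉₊ : ℝ) ≤ d / 2 := by
    linarith [Nat.ceil_lt_add_one (show 0 ≤ d / 4 by linarith)]
  have hs2 : (⌈m ^ (y + 1)⌉₊ : ℝ) ≤ d / 2 := by
    have h1 : m ^ (y + 1) ≤ m ^ 47 := pow_le_pow_right₀ hm1 (by omega)
    linarith [Nat.ceil_lt_add_one (show 0 ≤ m ^ (y + 1) by positivity)]
  refine ⟨⌈m ^ (y + 3)⌉₊, ⌈d * m ^ (y + 5)⌉₊, Nat.le_ceil _, Nat.le_ceil _, ?_⟩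
  classical
  let s : Fin ⌈m ^ (y + 3)⌉₊ ⊕ Fin ⌈d * m ^ (y + 5)⌉₊ → ℕ :=
    Sum.elim (fun _ => ⌈d / 4⌉₊) (fun _ => ⌈m ^ (y + 1)⌉₊)
  have hs : ∀ i, (s i : ℝ) ≤ d / 2 := by
    rintro (i | i)
    · exact hs1
    · exact hs2
  have hUc : (U.toFinset.card : ℝ) ≤ d * m ^ (y + 1) := by
    rwa [← Set.ncard_eq_toFinset_card']
  have hbudget := star_budget hd4 hm16 (show 2 * y + 7 ≤ x by omega)
  obtain ⟨c, L, h1, h2⟩ := greedy_stars (H := G.deleteEdges W) (N := d * m ^ x) s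
    (fun B hB i => exists_star_of_dense (by linarith) hG hW hWx B hB (s i) (hs i))
    U.toFinset Finset.univ (by
      simp only [s, Fintype.sum_sum_type, Sum.elim_inl, Sum.elim_inr, Finset.sum_const,
        Finset.card_univ, Fintype.card_fin, nsmul_eq_mul]
      linarith)
  have hcU : ∀ i, c i ∈ Uᶜ := fun i => by
    have := (h1 i (Finset.mem_univ i)).2.2
    rw [Finset.disjoint_insert_left] at this
    simpa using this.1
  have hLU : ∀ i, ∀ u ∈ L i, u ∈ Uᶜ := fun i u hu => by
    have := (h1 i (Finset.mem_univ i)).2.2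
    rw [Finset.disjoint_insert_left] at this
    simpa using Finset.disjoint_left.1 this.2 hu
  have hcard : ∀ i, ((L i).subtype (· ∈ Uᶜ)).card = s i := fun i => by
    rw [Finset.card_subtype, Finset.filter_true_of_mem (hLU i)]
    exact (h1 i (Finset.mem_univ i)).1
  refine ⟨fun i => ⟨c i, hcU i⟩, fun i => (L i).subtype (· ∈ Uᶜ), ?_, ?_,
    fun i => hcard _, fun j => hcard _, ?_⟩
  · intro i hi
    exact ((h1 i (Finset.mem_univ i)).2.1 (c i) (Finset.mem_subtype.1 hi)).ne rfl
  · intro i u hu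
    exact (h1 i (Finset.mem_univ i)).2.1 u (Finset.mem_subtype.1 hu)
  · intro i j hij
    have hdis := h2 i (Finset.mem_univ i) j (Finset.mem_univ j) hij
    have hmem : ∀ k (a : ↥(Uᶜ)), a ∈ (insert (⟨c k, hcU k⟩ : ↥(Uᶜ))
        (↑((L k).subtype (· ∈ Uᶜ)) : Set ↥(Uᶜ))) → (a : V) ∈ insert (c k) (L k) := by
      rintro k a (rfl | ha)
      · exact Finset.mem_insert_self _ _
      · exact Finset.mem_insert_of_mem (Finset.mem_subtype.1 (Finset.mem_coe.1 ha))
    rw [Set.disjoint_left]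
    intro a ha hb
    exact Finset.disjoint_left.1 hdis (hmem i a ha) (hmem j a hb)
end
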